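/- A finite set $\mathcal H$ of integers is called admissible if for every prime $p$ one has $\#\{n \bmod p : \prod_{h\in\mathcal H}(n+h)\equiv 0 \pmod p\}<p$; an admissible $k$-tuple is an admissible set of $k$ distinct integers. Let $\varphi$ be Euler's totient function and $\log$ the natural logarithm. Fix a positive integer $k$, a squarefree positive integer $q$, integers $0<r_1\le r_2\le\cdots\le r_k$ all coprime to $q$, and constants $C>0$ and $\delta>0$. Then there is a number $y'$, depending only on $q,r_1,\dots,r_k,k,C,\delta$, such that the following holds. Let $x,y,z$ be real numbers with $x\ge 1$, $y\ge y'$, $z\ge(1+\delta)y$ and $$2y\bigl(1+(1+r_k)x\bigr)\le\frac{2q}{\varphi(q)}\,z\le y\,\frac{\log\log y}{\log\log\log y}.$$ Let $\mathcal Z$ be any (possibly empty) set of primes such that every $p'\in\mathcal Z$ satisfies $\sum_{p\in\mathcal Z,\,p\ge p'}\frac1p\le\frac{C}{p'}$ and $p'\ge\frac{\log z}{C}$. Then there exist a set of integers $\{\tilde a_p : p\le y \text{ prime},\ p\notin\mathcal Z\}$ and an admissible $k$-tuple $\{h_1,\dots,h_k\}\subseteq(y,z]$ such that: (i) $\{h_1,\dots,h_k\}=\bigl((0,z]\cap\mathbb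 Z\bigr)\setminus\bigcup_{p\le y,\ p\notin\mathcal Z}\{g\in\mathbb Z: g\equiv\tilde a_p \pmod p\}$, the union being over primes $p$; (ii) for every prime $p$, $p\mid q$ implies $p\mid\tilde a_p$; (iii) for all $1\le i<j\le k$, every prime $p$ dividing $h_i-h_j$ satisfies $p\le y$; (iv) $h_i\equiv r_i\pmod q$ for all $1\le i\le k$. -/

import Mathlib

/-- A finite set of integers `H` is admissible if for every prime `p`, the residues `n mod p`
with `∏_{h ∈ H} (n + h) ≡ 0 (mod p)` do not cover all of `ℤ/pℤ`. -/
def AdmissibleSet (H : Finset ℤ) : Prop :=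
  ∀ p : ℕ, p.Prime → {n : ZMod p | ∏ h ∈ H, (n + (h : ZMod p)) = 0}.ncard < p

/-!
The construction is that of Erdős and Rankin. Take `c` to be the first multiple of `q` above `y`
and `h i = c + d i`, where the `d i` are bounded, congruent to `r i` modulo `q` and divisible by
every prime up to `k` that does not divide `q`; this leaves a free residue class modulo each prime.

Sieve `(0, z]` by the class of `c` modulo the medium primes `p ∈ [V, y / 8]` outside `𝒵`, where
`log V` is about `(log y) ^ (2 / 5)`. An integer `g` survives only if `g - c` has a divisor in `𝒵`,
has a prime factor above `y / 8`, or is `V`-smooth. Sparsity of `𝒵`, Chebyshev's bound and Rankin's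
trick leave `O (y / log y * (log log y) ^ 2)` survivors. Choosing greedily the best class
modulo each small prime `p ∈ [log y, V)` outside `𝒵`, among the classes containing no `h i`, saves a
further fixed power of `log y`. There are then fewer survivors than primes in `(y / 8, y]` outside
`𝒵`, and each survivor other than the `h i` is removed by a large prime of its own. Medium primes
exceed every `d i`, so the class of `c` contains no `h i`; a large prime is allotted to a survivor
only if it divides no difference with an `h i`.
-/

open Filter Finset Real

/-! ### Sums over primes -/

theorem sum_rpow_neg_le_prod_primesBelow {s : ℝ} (hs : 0 < s) {N : ℕ} {F : Finset ℕ}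
    (hF : ∀ n ∈ F, n ∈ N.smoothNumbers) :
    ∑ n ∈ F, (n : ℝ) ^ (-s) ≤ ∏ p ∈ N.primesBelow, (1 - (p : ℝ) ^ (-s))⁻¹ := by
  let f : ℕ →* ℝ :=
    { toFun := fun n => (n : ℝ) ^ (-s)
      map_one' := by simp
      map_mul' := fun m n => by
        rw [Nat.cast_mul, mul_rpow (Nat.cast_nonneg _) (Nat.cast_nonneg _)] }
  have norm_lt_one {p : ℕ} (hp : p.Prime) : ‖f p‖ < 1 := by
    rw [norm_of_nonneg (show 0 ≤ f p from rpow_nonneg (Nat.cast_nonneg p) _)]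
    exact rpow_lt_one_of_one_lt_of_neg (mod_cast hp.one_lt) (neg_neg_of_pos hs)
  have hsum : HasSum (N.smoothNumbers.indicator f) (∏ p ∈ N.primesBelow, (1 - f p)⁻¹) :=
    hasSum_subtype_iff_indicator.mp
      (EulerProduct.summable_and_hasSum_smoothNumbers_prod_primesBelow_geometric norm_lt_one N).2
  calc ∑ n ∈ F, f n = ∑ n ∈ F, N.smoothNumbers.indicator f n :=
        sum_congr rfl fun n hn => (Set.indicator_of_mem (hF n hn) _).symm
    _ ≤ ∏ p ∈ N.primesBelow, (1 - f p)⁻¹ :=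
        sum_le_hasSum F (fun n _ => Set.indicator_nonneg
          (fun m _ => rpow_nonneg (Nat.cast_nonneg m) _) n) hsum

theorem primesBelow_six_mul_succ_subset {m : ℕ} (hm : 0 < m) :
    (6 * (m + 1)).primesBelow ⊆ (6 * m).primesBelow ∪ {6 * m + 1, 6 * m + 5} := by
  intro p hp
  obtain ⟨hlt, hprime⟩ := Nat.mem_primesBelow.mp hp
  have two_ndvd (hge : 6 * m ≤ p) : ¬ 2 ∣ p := fun h => by
    have := (Nat.prime_dvd_prime_iff_eq Nat.prime_two hprime).mp h
    omega
  have three_ndvd (hge : 6 * m ≤ p) : ¬ 3 ∣ p := fun h => by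
    have := (Nat.prime_dvd_prime_iff_eq Nat.prime_three hprime).mp h
    omega
  simp only [mem_union, Nat.mem_primesBelow, mem_insert, mem_singleton]
  rcases lt_or_ge p (6 * m) with h | h
  · exact Or.inl ⟨h, hprime⟩
  · have := two_ndvd h
    have := three_ndvd h
    omega

theorem sum_inv_primesBelow_six_mul_le (m : ℕ) :
    ∑ p ∈ (6 * (m + 1)).primesBelow, (1 : ℝ) / p ≤ 31 / 30 + 1 / 3 * (harmonic m : ℝ) := by
  induction m with
  | zero =>
    have : (6 * (0 + 1)).primesBelow = {2, 3, 5} := by decide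
    norm_num [this]
  | succ m ih =>
    set n := 6 * (m + 1) with hn
    have inv_le (j : ℕ) : (1 : ℝ) / (n + j : ℕ) ≤ 1 / 6 * (1 / (m + 1 : ℕ)) := by
      rw [one_div_mul_one_div, hn]
      gcongr
      push_cast
      linarith [Nat.cast_nonneg (α := ℝ) j]
    calc ∑ p ∈ (6 * (m + 1 + 1)).primesBelow, (1 : ℝ) / p
        ≤ ∑ p ∈ n.primesBelow ∪ {n + 1, n + 5}, (1 : ℝ) / p := by
          gcongr
          exact primesBelow_six_mul_succ_subset m.succ_pos
      _ ≤ ∑ p ∈ n.primesBelow, (1 : ℝ) / p + ∑ p ∈ {n + 1, n + 5}, (1 : ℝ) / (p : ℕ) := by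
          rw [← sum_union_inter]
          exact le_add_of_nonneg_right (sum_nonneg fun _ _ => by positivity)
      _ = ∑ p ∈ n.primesBelow, (1 : ℝ) / p + (1 / (n + 1 : ℕ) + 1 / (n + 5 : ℕ)) := by
          rw [sum_pair (by omega)]
      _ ≤ 31 / 30 + 1 / 3 * (harmonic (m + 1) : ℝ) := by
          rw [harmonic_succ, Rat.cast_add, Rat.cast_inv, Rat.cast_natCast]
          linarith [inv_le 1, inv_le 5, one_div ((m + 1 : ℕ) : ℝ)]

/-- Primes greater than `3` lie in two of the six classes modulo `6`; the factor `1 / 3` this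
gains over the trivial bound is all that the sieve needs. -/
theorem sum_inv_primesBelow_le (N : ℕ) :
    ∑ p ∈ N.primesBelow, (1 : ℝ) / p ≤ 2 + 1 / 3 * log N := by
  have hsub : N.primesBelow ⊆ (6 * (N / 6 + 1)).primesBelow := by
    intro p hp
    rw [Nat.mem_primesBelow] at hp ⊢
    exact ⟨by omega, hp.2⟩
  have hlog : log (N / 6 : ℕ) ≤ log N := by
    rcases Nat.eq_zero_or_pos (N / 6) with h | h
    · simpa [h] using log_natCast_nonneg N
    · exact log_le_log (mod_cast h) (mod_cast Nat.div_le_self N 6)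
  calc ∑ p ∈ N.primesBelow, (1 : ℝ) / p
      ≤ ∑ p ∈ (6 * (N / 6 + 1)).primesBelow, (1 : ℝ) / p := by gcongr
    _ ≤ 31 / 30 + 1 / 3 * (harmonic (N / 6) : ℝ) := sum_inv_primesBelow_six_mul_le _
    _ ≤ 2 + 1 / 3 * log N := by linarith [harmonic_le_one_add_log (N / 6)]

theorem sum_range_inv_mul_succ (n : ℕ) :
    ∑ m ∈ range n, (1 : ℝ) / ((m + 2) * (m + 1)) = 1 - 1 / (n + 1) := by
  induction n with
  | zero => simp
  | succ n ih =>
    rw [sum_range_succ, ih]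
    push_cast
    field_simp
    ring

theorem sum_inv_mul_pred_primesBelow_le (N : ℕ) :
    ∑ p ∈ N.primesBelow, (1 : ℝ) / (p * (p - 1)) ≤ 1 := by
  have hsub : N.primesBelow ⊆ (range N).map (addRightEmbedding 2) := by
    intro p hp
    obtain ⟨hlt, hprime⟩ := Nat.mem_primesBelow.mp hp
    have := hprime.two_le
    exact mem_map.mpr ⟨p - 2, mem_range.mpr (by omega), Nat.sub_add_cancel this⟩
  have shift (m : ℕ) : (1 : ℝ) / ((m + 2 : ℕ) * ((m + 2 : ℕ) - 1)) = 1 / ((m + 2) * (m + 1)) := by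
    push_cast
    congr 2
    ring
  calc ∑ p ∈ N.primesBelow, (1 : ℝ) / (p * (p - 1))
      ≤ ∑ p ∈ (range N).map (addRightEmbedding 2), (1 : ℝ) / (p * (p - 1)) := by
        refine sum_le_sum_of_subset_of_nonneg hsub fun p hp _ => ?_
        obtain ⟨m, -, rfl⟩ := mem_map.mp hp
        rw [addRightEmbedding_apply, shift]
        positivity
    _ = ∑ m ∈ range N, (1 : ℝ) / ((m + 2) * (m + 1)) := by
        simp only [sum_map, addRightEmbedding_apply, shift]
    _ ≤ 1 := by
        rw [sum_range_inv_mul_succ]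
        linarith [one_div_nonneg.mpr (by positivity : (0 : ℝ) ≤ N + 1)]

theorem inv_one_sub_inv_le_exp {t : ℝ} (ht : 1 < t) :
    (1 - t⁻¹)⁻¹ ≤ exp (1 / t + 1 / (t * (t - 1))) := by
  have h0 : t ≠ 0 := by linarith
  have h1 : t - 1 ≠ 0 := by linarith
  calc (1 - t⁻¹)⁻¹ = 1 / t + 1 / (t * (t - 1)) + 1 := by
        field_simp
        ring
    _ ≤ exp (1 / t + 1 / (t * (t - 1))) := add_one_le_exp _

theorem log_le_prod_primesBelow {N : ℕ} (hN : 0 < N) :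
    log N ≤ ∏ p ∈ N.primesBelow, (1 - (p : ℝ)⁻¹)⁻¹ := by
  obtain ⟨n, rfl⟩ := Nat.exists_eq_add_of_le' hN
  calc log (n + 1 : ℕ) ≤ ∑ m ∈ Icc 1 n, (m : ℝ)⁻¹ := by
        have := log_add_one_le_harmonic n
        rw [harmonic_eq_sum_Icc] at this
        push_cast at this ⊢
        exact this
    _ ≤ ∏ p ∈ (n + 1).primesBelow, (1 - (p : ℝ)⁻¹)⁻¹ := by
        have hsmooth : ∀ m ∈ Icc 1 n, m ∈ (n + 1).smoothNumbers := fun m hm =>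
          Nat.mem_smoothNumbers_of_lt (mem_Icc.mp hm).1 (Nat.lt_succ_of_le (mem_Icc.mp hm).2)
        simpa only [rpow_neg_one] using sum_rpow_neg_le_prod_primesBelow one_pos hsmooth

theorem log_log_sub_one_le_sum_inv_primesBelow {N : ℕ} (hN : 2 ≤ N) :
    log (log N) - 1 ≤ ∑ p ∈ N.primesBelow, (1 : ℝ) / p := by
  have one_lt {p : ℕ} (hp : p ∈ N.primesBelow) : (1 : ℝ) < p :=
    mod_cast (Nat.prime_of_mem_primesBelow hp).one_lt
  have hlog : log N ≤ exp (∑ p ∈ N.primesBelow, ((1 : ℝ) / p + 1 / (p * (p - 1)))) := by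
    rw [exp_sum]
    refine (log_le_prod_primesBelow (by omega)).trans (prod_le_prod (fun p hp => ?_)
      fun p hp => inv_one_sub_inv_le_exp (one_lt hp))
    exact inv_nonneg.mpr (sub_nonneg.mpr (inv_le_one_of_one_le₀ (one_lt hp).le))
  have hloglog := log_le_log (log_pos (mod_cast hN)) hlog
  rw [log_exp, sum_add_distrib] at hloglog
  linarith [sum_inv_mul_pred_primesBelow_le N]

/-! ### Rankin's bound for smooth numbers -/

theorem inv_one_sub_le_exp_four_mul {t : ℝ} (ht0 : 0 ≤ t) (ht : t ≤ 3 / 4) :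
    (1 - t)⁻¹ ≤ exp (4 * t) := by
  refine le_trans ?_ (add_one_le_exp _)
  rw [inv_le_iff_one_le_mul₀ (by linarith)]
  nlinarith

theorem rpow_neg_le_three_quarters {x s : ℝ} (hx : 2 ≤ x) (hs : 1 / 2 ≤ s) :
    x ^ (-s) ≤ 3 / 4 :=
  calc x ^ (-s) ≤ 2 ^ (-s) := rpow_le_rpow_of_nonpos two_pos hx (by linarith)
    _ ≤ 2 ^ (-(1 / 2) : ℝ) := rpow_le_rpow_of_exponent_le one_le_two (by linarith)
    _ = (√2)⁻¹ := by rw [rpow_neg two_pos.le, sqrt_eq_rpow]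
    _ ≤ 3 / 4 := by
        rw [inv_le_comm₀ (by positivity) (by norm_num)]
        exact le_sqrt_of_sq_le (by norm_num)

theorem rpow_inv_log_sub_one_le {n N : ℕ} (hn : 0 < n) (hnN : n ≤ N) (hN : 0 < log N) :
    (n : ℝ) ^ (-(1 - 1 / log N)) ≤ 3 * (n : ℝ)⁻¹ := by
  have hn' : (0 : ℝ) < n := mod_cast hn
  have hN' : (0 : ℝ) < N := hn'.trans_le (mod_cast hnN)
  calc (n : ℝ) ^ (-(1 - 1 / log N)) = (n : ℝ) ^ (1 / log N) * (n : ℝ)⁻¹ := by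
        rw [← rpow_neg_one, ← rpow_add hn', neg_sub, sub_eq_add_neg]
    _ ≤ (N : ℝ) ^ (1 / log N) * (n : ℝ)⁻¹ := by gcongr
    _ = exp 1 * (n : ℝ)⁻¹ := by rw [rpow_def_of_pos hN', mul_one_div_cancel hN.ne']
    _ ≤ 3 * (n : ℝ)⁻¹ := by gcongr; linarith [exp_one_lt_d9]

theorem sum_primesBelow_rpow_inv_log_sub_one_le {N : ℕ} (hN : 0 < log N) :
    ∑ p ∈ N.primesBelow, (p : ℝ) ^ (-(1 - 1 / log N)) ≤ 3 * (1 + log N) := by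
  have hsub : N.primesBelow ⊆ Icc 1 N := fun p hp =>
    mem_Icc.mpr ⟨(Nat.prime_of_mem_primesBelow hp).one_le, (Nat.lt_of_mem_primesBelow hp).le⟩
  have hharmonic := harmonic_le_one_add_log N
  rw [harmonic_eq_sum_Icc] at hharmonic
  push_cast at hharmonic
  calc ∑ p ∈ N.primesBelow, (p : ℝ) ^ (-(1 - 1 / log N))
      ≤ ∑ n ∈ Icc 1 N, (n : ℝ) ^ (-(1 - 1 / log N)) :=
        sum_le_sum_of_subset_of_nonneg hsub fun _ _ _ => by positivity
    _ ≤ ∑ n ∈ Icc 1 N, 3 * (n : ℝ)⁻¹ := sum_le_sum fun n hn =>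
        rpow_inv_log_sub_one_le (mem_Icc.mp hn).1 (mem_Icc.mp hn).2 hN
    _ ≤ 3 * (1 + log N) := by
        rw [← mul_sum]
        gcongr

theorem card_smoothNumbersUpTo_le_rpow_mul_sum (X N : ℕ) {s : ℝ} (hs : 0 ≤ s) :
    (#(Nat.smoothNumbersUpTo X N) : ℝ) ≤
      (X : ℝ) ^ s * ∑ n ∈ Nat.smoothNumbersUpTo X N, (n : ℝ) ^ (-s) := by
  rw [mul_sum, cast_card]
  refine sum_le_sum fun n hn => ?_
  obtain ⟨hnX, hn⟩ := Nat.mem_smoothNumbersUpTo.mp hn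
  have hn0 : (0 : ℝ) < n := mod_cast Nat.pos_of_ne_zero (Nat.ne_zero_of_mem_smoothNumbers hn)
  rw [rpow_neg hn0.le, ← div_eq_mul_inv, one_le_div (by positivity)]
  exact rpow_le_rpow hn0.le (mod_cast hnX) hs

theorem card_smoothNumbersUpTo_le {N : ℕ} (hN : 2 ≤ log N) {X : ℕ} (hX : 0 < X) :
    (#(Nat.smoothNumbersUpTo X N) : ℝ) ≤ X * exp (12 * (1 + log N) - log X / log N) := by
  set σ : ℝ := 1 - 1 / log N with hσ
  have half_le : 1 / 2 ≤ σ := by linarith [one_div_le_one_div_of_le two_pos hN]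
  have two_le {p : ℕ} (hp : p ∈ N.primesBelow) : (2 : ℝ) ≤ p :=
    mod_cast (Nat.prime_of_mem_primesBelow hp).two_le
  have hX' : (0 : ℝ) < X := mod_cast hX
  calc (#(Nat.smoothNumbersUpTo X N) : ℝ)
      ≤ (X : ℝ) ^ σ * ∑ n ∈ Nat.smoothNumbersUpTo X N, (n : ℝ) ^ (-σ) :=
        card_smoothNumbersUpTo_le_rpow_mul_sum X N (by linarith)
    _ ≤ (X : ℝ) ^ σ * ∏ p ∈ N.primesBelow, (1 - (p : ℝ) ^ (-σ))⁻¹ := by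
        gcongr
        exact sum_rpow_neg_le_prod_primesBelow (by linarith)
          fun n hn => (Nat.mem_smoothNumbersUpTo.mp hn).2
    _ ≤ (X : ℝ) ^ σ * ∏ p ∈ N.primesBelow, exp (4 * (p : ℝ) ^ (-σ)) := by
        refine mul_le_mul_of_nonneg_left (prod_le_prod (fun p hp => ?_) fun p hp => ?_)
          (by positivity)
        · exact inv_nonneg.mpr (by linarith [rpow_neg_le_three_quarters (two_le hp) half_le])
        · exact inv_one_sub_le_exp_four_mul (by positivity)
            (rpow_neg_le_three_quarters (two_le hp) half_le)
    _ ≤ (X : ℝ) ^ σ * exp (12 * (1 + log N)) := by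
        rw [← exp_sum, ← mul_sum]
        refine mul_le_mul_of_nonneg_left (exp_le_exp.mpr ?_) (by positivity)
        linarith [sum_primesBelow_rpow_inv_log_sub_one_le (by linarith : 0 < log N)]
    _ = X * exp (12 * (1 + log N) - log X / log N) := by
        nth_rewrite 2 [← exp_log hX']
        rw [rpow_def_of_pos hX', ← exp_add, ← exp_add, hσ]
        congr 1
        ring

/-! ### Sieving by residue classes -/

section Sieve

variable {ι : Type*} {h : ι → ℤ} {a e : ℕ → ℤ}

/-- The elements of `S` surviving the sieve that removes, for each `p ∈ P`, the residue class of
`a p` modulo `p`. -/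
def sifted (S : Finset ℤ) (P : Finset ℕ) (a : ℕ → ℤ) : Finset ℤ :=
  {g ∈ S | ∀ p ∈ P, ¬ g ≡ a p [ZMOD p]}

/-- The residue classes `a p` modulo the primes `p` contain none of the integers `h i`. As this is
required for every prime, not only for those used in the sieve, it also yields admissibility of the
`h i`. -/
def AvoidsClasses (h : ι → ℤ) (a : ℕ → ℤ) : Prop :=
  ∀ p : ℕ, p.Prime → ∀ i, ¬ h i ≡ a p [ZMOD p]

theorem mem_sifted {S : Finset ℤ} {P : Finset ℕ} {g : ℤ} :
    g ∈ sifted S P a ↔ g ∈ S ∧ ∀ p ∈ P, ¬ g ≡ a p [ZMOD p] :=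
  mem_filter

theorem sifted_union (S : Finset ℤ) (P Q : Finset ℕ) (a : ℕ → ℤ) :
    sifted S (P ∪ Q) a = sifted (sifted S P a) Q a := by
  simp only [sifted, filter_filter, forall_mem_union]

theorem sifted_congr (S : Finset ℤ) {P : Finset ℕ} {b : ℕ → ℤ} (hab : ∀ p ∈ P, a p = b p) :
    sifted S P a = sifted S P b :=
  filter_congr fun g _ => forall₂_congr fun p hp => by rw [hab p hp]

theorem AvoidsClasses.piecewise (he : AvoidsClasses h e) (P : Finset ℕ)
    (ha : ∀ p ∈ P, p.Prime → ∀ i, ¬ h i ≡ a p [ZMOD p]) : AvoidsClasses h (P.piecewise a e) := by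
  intro p hp i
  by_cases hpP : p ∈ P
  · rw [piecewise_eq_of_mem _ _ _ hpP]
    exact ha p hpP hp i
  · rw [piecewise_eq_of_notMem _ _ _ hpP]
    exact he p hp i

theorem pow_card_le_natAbs_of_prime_dvd {P : Finset ℕ} {B : ℕ} {n : ℤ} (hn : n ≠ 0)
    (hP : ∀ p ∈ P, p.Prime ∧ B ≤ p ∧ (p : ℤ) ∣ n) : B ^ #P ≤ n.natAbs :=
  calc B ^ #P = ∏ _p ∈ P, B := (prod_const B).symm
    _ ≤ ∏ p ∈ P, p := prod_le_prod' fun p hp => (hP p hp).2.1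
    _ ≤ n.natAbs := Nat.le_of_dvd (Int.natAbs_pos.mpr hn) <|
        prod_primes_dvd _ (fun p hp => (hP p hp).1.prime)
          fun p hp => Int.natCast_dvd.mp (hP p hp).2.2

theorem sum_inv_prime_dvd_le {P : Finset ℕ} {B : ℕ} (hB : 0 < B) (hP : ∀ p ∈ P, p.Prime ∧ B ≤ p)
    {n : ℤ} (hn : n ≠ 0) {X : ℕ} (hX : n.natAbs ≤ X) :
    ∑ p ∈ P with ((p : ℕ) : ℤ) ∣ n, (1 : ℝ) / p ≤ log X / log 2 / B := by
  have hcard : 2 ^ #{p ∈ P | ((p : ℕ) : ℤ) ∣ n} ≤ X :=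
    (pow_card_le_natAbs_of_prime_dvd hn fun p hp =>
      ⟨(hP p (mem_filter.mp hp).1).1, (hP p (mem_filter.mp hp).1).1.two_le,
        (mem_filter.mp hp).2⟩).trans hX
  calc ∑ p ∈ P with ((p : ℕ) : ℤ) ∣ n, (1 : ℝ) / p
      ≤ #{p ∈ P | ((p : ℕ) : ℤ) ∣ n} • (1 / B : ℝ) := by
        refine sum_le_card_nsmul _ _ _ fun p hp => ?_
        exact one_div_le_one_div_of_le (mod_cast hB) (mod_cast (hP p (mem_filter.mp hp).1).2)
    _ ≤ log X / log 2 * (1 / B) := by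
        rw [nsmul_eq_mul]
        gcongr
        rw [le_div_iff₀ (log_pos one_lt_two), ← log_pow]
        exact log_le_log (by positivity) (mod_cast hcard)
    _ = log X / log 2 / B := by rw [mul_one_div]

/-! ### Greedy sieving by small primes -/

open Classical in
/-- The factor by which sieving by a well chosen class modulo `p` reduces the weight of `g`. It is
`1` in the classes of the `h i`, which must not be removed. -/
noncomputable def survivalFactor (h : ι → ℤ) (g : ℤ) (p : ℕ) : ℝ :=
  if ∃ i, g ≡ h i [ZMOD p] then 1 else 1 - 1 / p

theorem survivalFactor_nonneg (h : ι → ℤ) (g : ℤ) (p : ℕ) : 0 ≤ survivalFactor h g p := by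
  unfold survivalFactor
  split_ifs
  · exact zero_le_one
  · exact sub_nonneg.mpr (one_div (p : ℝ) ▸ Nat.cast_inv_le_one p)

theorem sum_mul_survivalFactor [Fintype ι] (h : ι → ℤ) (p : ℕ) (S : Finset ℤ) (u : ℤ → ℝ) :
    ∑ g ∈ S, u g * survivalFactor h g p =
      ∑ g ∈ S, u g - 1 / p * ∑ g ∈ S with ∀ i, ¬ g ≡ h i [ZMOD p], u g := by
  rw [sum_filter, mul_sum, ← sum_sub_distrib]
  refine sum_congr rfl fun g _ => ?_
  by_cases hg : ∃ i, g ≡ h i [ZMOD p]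
  · have hg' : ¬ ∀ i, ¬ g ≡ h i [ZMOD p] := not_forall_not.mpr hg
    rw [survivalFactor, if_pos hg, if_neg hg']
    ring
  · rw [survivalFactor, if_neg hg, if_pos (not_exists.mp hg)]
    ring

theorem exists_class_mul_sum_le_sum [Fintype ι] {p : ℕ} (hp : Fintype.card ι < p) (h : ι → ℤ)
    (S : Finset ℤ) {u : ℤ → ℝ} (hu : ∀ g, 0 ≤ u g) :
    ∃ b : ℤ, (∀ i, ¬ h i ≡ b [ZMOD p]) ∧
      1 / p * ∑ g ∈ S with ∀ i, ¬ g ≡ h i [ZMOD p], u g ≤ ∑ g ∈ S with g ≡ b [ZMOD p], u g := by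
  have : NeZero p := ⟨by omega⟩
  have hp0 : (0 : ℝ) < p := mod_cast this.pos
  set T : Finset ℤ := {g ∈ S | ∀ i, ¬ g ≡ h i [ZMOD p]} with hT
  set B : Finset (ZMod p) := (univ.image fun i => (h i : ZMod p))ᶜ with hB
  have mem_B (b : ℤ) : (b : ZMod p) ∈ B ↔ ∀ i, ¬ h i ≡ b [ZMOD p] := by
    simp [hB, ZMod.intCast_eq_intCast_iff]
  have maps_to : ∀ g ∈ T, (g : ZMod p) ∈ B := fun g hg =>
    (mem_B g).mpr fun i hi => (mem_filter.mp hg).2 i hi.symm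
  have hne : B.Nonempty := by
    refine card_pos.mp ?_
    rw [hB, card_compl, ZMod.card]
    have : #(univ.image fun i => (h i : ZMod p)) ≤ Fintype.card ι := card_image_le
    omega
  have hcard : #B • (1 / p * ∑ g ∈ T, u g) ≤ ∑ g ∈ T, u g := by
    have hBp : (#B : ℝ) ≤ p := mod_cast (card_le_univ B).trans_eq (ZMod.card p)
    rw [nsmul_eq_mul, ← mul_assoc, mul_one_div]
    exact mul_le_of_le_one_left (sum_nonneg fun g _ => hu g) ((div_le_one hp0).mpr hBp)
  obtain ⟨x, hxB, hx⟩ := exists_le_sum_fiber_of_maps_to_of_nsmul_le_sum maps_to hne hcard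
  obtain ⟨b, rfl⟩ := ZMod.intCast_surjective x
  refine ⟨b, (mem_B b).mp hxB, hx.trans (sum_le_sum_of_subset_of_nonneg ?_ fun g _ _ => hu g)⟩
  intro g hg
  simp only [hT, mem_filter, ZMod.intCast_eq_intCast_iff] at hg
  exact mem_filter.mpr ⟨hg.1.1, hg.2⟩

theorem exists_class_sum_filter_not_modEq_le [Fintype ι] {p : ℕ} (hp : Fintype.card ι < p)
    (h : ι → ℤ) (S : Finset ℤ) {u : ℤ → ℝ} (hu : ∀ g, 0 ≤ u g) :
    ∃ b : ℤ, (∀ i, ¬ h i ≡ b [ZMOD p]) ∧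
      ∑ g ∈ S with ¬ g ≡ b [ZMOD p], u g ≤ ∑ g ∈ S, u g * survivalFactor h g p := by
  obtain ⟨b, hb, hsum⟩ := exists_class_mul_sum_le_sum hp h S hu
  refine ⟨b, hb, ?_⟩
  rw [sum_mul_survivalFactor]
  linarith [sum_filter_add_sum_filter_not S (fun g => g ≡ b [ZMOD p]) u]

theorem exists_forall_not_modEq [Fintype ι] {p : ℕ} (hp : Fintype.card ι < p) (h : ι → ℤ) :
    ∃ b : ℤ, ∀ i, ¬ h i ≡ b [ZMOD p] :=
  (exists_class_mul_sum_le_sum hp h ∅ fun _ => le_refl (0 : ℝ)).imp fun _ => And.left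

theorem AvoidsClasses.exists_card_sifted_le_sum [Fintype ι] (he : AvoidsClasses h e)
    (P : Finset ℕ) (hP : ∀ p ∈ P, Fintype.card ι < p) (S : Finset ℤ) :
    ∃ a : ℕ → ℤ, AvoidsClasses h a ∧ (∀ p ∉ P, a p = e p) ∧
      (#(sifted S P a) : ℝ) ≤ ∑ g ∈ S, ∏ p ∈ P, survivalFactor h g p := by
  induction P using Finset.induction_on generalizing S with
  | empty => exact ⟨e, he, fun _ _ => rfl, by simp [sifted]⟩
  | insert p P hpP ih =>
    obtain ⟨b, hb, hsum⟩ := exists_class_sum_filter_not_modEq_le (hP p (mem_insert_self _ _)) h S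
      (u := fun g => ∏ r ∈ P, survivalFactor h g r)
      fun g => prod_nonneg fun r _ => survivalFactor_nonneg h g r
    obtain ⟨a, ha, hae, hcard⟩ := ih (fun r hr => hP r (mem_insert_of_mem hr))
      {g ∈ S | ¬ g ≡ b [ZMOD p]}
    have update_eq (r : ℕ) (hr : r ∈ P) : Function.update a p b r = a r :=
      Function.update_of_ne (ne_of_mem_of_not_mem hr hpP) _ _
    refine ⟨Function.update a p b, fun r hr i => ?_, fun r hr => ?_, ?_⟩
    · rcases eq_or_ne r p with rfl | hrp
      · simpa using hb i
      · simpa [hrp] using ha r hr i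
    · rw [mem_insert, not_or] at hr
      rw [Function.update_of_ne hr.1, hae r hr.2]
    · have hsifted : sifted S (insert p P) (Function.update a p b) =
          sifted {g ∈ S | ¬ g ≡ b [ZMOD p]} P a := by
        rw [insert_eq, sifted_union, sifted_congr _ update_eq]
        simp [sifted]
      simp_rw [prod_insert hpP, mul_comm (survivalFactor h _ p)]
      exact hsifted ▸ hcard.trans hsum

theorem survivalFactor_le_exp [Fintype ι] (h : ι → ℤ) (g : ℤ) (p : ℕ) :
    survivalFactor h g p ≤ exp (-(1 / p) + ∑ i, if (p : ℤ) ∣ h i - g then (1 : ℝ) / p else 0) := by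
  have hnonneg (i : ι) : (0 : ℝ) ≤ if (p : ℤ) ∣ h i - g then (1 : ℝ) / p else 0 := by
    split_ifs <;> positivity
  unfold survivalFactor
  split_ifs with hg
  · obtain ⟨i, hi⟩ := hg
    have hsingle := single_le_sum (fun i _ => hnonneg i) (mem_univ i)
    rw [if_pos (Int.modEq_iff_dvd.mp hi)] at hsingle
    exact one_le_exp (by linarith)
  · have hsum : 0 ≤ ∑ i, if (p : ℤ) ∣ h i - g then (1 : ℝ) / p else 0 :=
      sum_nonneg fun i _ => hnonneg i
    linarith [add_one_le_exp (-(1 / p : ℝ) + ∑ i, if (p : ℤ) ∣ h i - g then (1 : ℝ) / p else 0)]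

theorem prod_survivalFactor_le [Fintype ι] {P : Finset ℕ} {B X : ℕ} (hB : 0 < B)
    (hP : ∀ p ∈ P, p.Prime ∧ B ≤ p) {g : ℤ} (hg : ∀ i, h i ≠ g)
    (hgX : ∀ i, (h i - g).natAbs ≤ X) :
    ∏ p ∈ P, survivalFactor h g p ≤
      exp (-∑ p ∈ P, (1 : ℝ) / p + Fintype.card ι * (log X / log 2 / B)) := by
  refine (prod_le_prod (fun p _ => survivalFactor_nonneg h g p)
    fun p _ => survivalFactor_le_exp h g p).trans ?_
  rw [← exp_sum, exp_le_exp, sum_add_distrib, sum_neg_distrib, sum_comm]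
  gcongr
  simp_rw [← sum_filter]
  calc ∑ i, ∑ p ∈ P with ((p : ℕ) : ℤ) ∣ h i - g, (1 : ℝ) / p
      ≤ ∑ _i : ι, log X / log 2 / B :=
        sum_le_sum fun i _ => sum_inv_prime_dvd_le hB hP (sub_ne_zero.mpr (hg i)) (hgX i)
    _ = Fintype.card ι * (log X / log 2 / B) := by
        rw [sum_const, card_univ, nsmul_eq_mul]

theorem AvoidsClasses.exists_card_sifted_le [Fintype ι] (he : AvoidsClasses h e) {P : Finset ℕ}
    {B X : ℕ} (hB : Fintype.card ι < B) (hP : ∀ p ∈ P, p.Prime ∧ B ≤ p) {S : Finset ℤ}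
    (hS : ∀ g ∈ S, ∀ i, h i ≠ g ∧ (h i - g).natAbs ≤ X) :
    ∃ a : ℕ → ℤ, AvoidsClasses h a ∧ (∀ p ∉ P, a p = e p) ∧
      (#(sifted S P a) : ℝ) ≤
        #S * exp (-∑ p ∈ P, (1 : ℝ) / p + Fintype.card ι * (log X / log 2 / B)) := by
  obtain ⟨a, ha, hae, hcard⟩ :=
    he.exists_card_sifted_le_sum P (fun p hp => hB.trans_le (hP p hp).2) S
  refine ⟨a, ha, hae, hcard.trans ?_⟩
  rw [← nsmul_eq_mul]
  exact sum_le_card_nsmul _ _ _ fun g hg => prod_survivalFactor_le (by omega) hP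
    (fun i => (hS g hg i).1) fun i => (hS g hg i).2

/-! ### Matching survivors with large primes -/

theorem exists_injOn_forall_mem_not {α β : Type*} [Nonempty β]
    {T : Finset α} {L : Finset β} {bad : α → β → Prop} [∀ g, DecidablePred (bad g)] {m : ℕ}
    (hbad : ∀ g ∈ T, #{p ∈ L | bad g p} ≤ m) (hcard : #T + m ≤ #L) :
    ∃ f : α → β, Set.InjOn f T ∧ ∀ g ∈ T, f g ∈ L ∧ ¬ bad g (f g) := by
  classical
  induction T using Finset.induction_on with
  | empty => exact ⟨fun _ => Classical.arbitrary β, by simp, by simp⟩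
  | insert g T hg ih =>
    rw [card_insert_of_notMem hg] at hcard
    obtain ⟨f, hinj, hf⟩ := ih (fun x hx => hbad x (mem_insert_of_mem hx)) (by omega)
    have hlt : #(T.image f ∪ {p ∈ L | bad g p}) < #L := by
      have h₁ := card_union_le (T.image f) {p ∈ L | bad g p}
      have h₂ : #(T.image f) ≤ #T := card_image_le
      have h₃ := hbad g (mem_insert_self _ _)
      omega
    obtain ⟨p, hpL, hp⟩ := exists_mem_notMem_of_card_lt_card hlt
    simp only [mem_union, mem_image, mem_filter, not_or, not_exists, not_and] at hp
    have update_eq : Set.EqOn (Function.update f g p) f T := fun x hx =>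
      Function.update_of_ne (ne_of_mem_of_not_mem hx hg) _ _
    refine ⟨Function.update f g p, ?_, forall_mem_insert _ _ _ |>.mpr ⟨?_, fun x hx => ?_⟩⟩
    · rw [coe_insert, Set.injOn_insert (mem_coe.not.mpr hg), update_eq.injOn_iff,
        update_eq.image_eq, Function.update_self]
      exact ⟨hinj, fun ⟨x, hx, hxp⟩ => hp.1 x hx hxp⟩
    · rw [Function.update_self]
      exact ⟨hpL, hp.2 hpL⟩
    · rw [update_eq hx]
      exact hf x hx

theorem card_filter_exists_modEq_le [Fintype ι] {L : Finset ℕ} {W X : ℕ}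
    (hL : ∀ p ∈ L, p.Prime ∧ W ≤ p) (hXW : X < W ^ 2) {g : ℤ} (hg : ∀ i, h i ≠ g)
    (hgX : ∀ i, (h i - g).natAbs ≤ X) :
    #{p ∈ L | ∃ i, g ≡ h i [ZMOD (p : ℕ)]} ≤ Fintype.card ι := by
  have card_le_one (i : ι) : #{p ∈ L | g ≡ h i [ZMOD (p : ℕ)]} ≤ 1 := by
    have hpow : W ^ #{p ∈ L | g ≡ h i [ZMOD (p : ℕ)]} < W ^ 2 :=
      (pow_card_le_natAbs_of_prime_dvd (sub_ne_zero.mpr (hg i)) fun p hp =>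
        ⟨(hL p (mem_filter.mp hp).1).1, (hL p (mem_filter.mp hp).1).2,
          Int.modEq_iff_dvd.mp (mem_filter.mp hp).2⟩).trans_lt ((hgX i).trans_lt hXW)
    have hW : 0 < W := Nat.pos_of_ne_zero fun hW => by simp [hW] at hXW
    exact Nat.lt_succ_iff.mp (lt_of_not_ge fun hge => hpow.not_ge (Nat.pow_le_pow_right hW hge))
  have hsub : {p ∈ L | ∃ i, g ≡ h i [ZMOD (p : ℕ)]} ⊆
      univ.biUnion fun i => {p ∈ L | g ≡ h i [ZMOD (p : ℕ)]} := by
    intro p hp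
    simpa [exists_and_left] using hp
  simpa using (card_le_card hsub).trans (card_biUnion_le_card_mul _ _ 1 fun i _ => card_le_one i)

theorem AvoidsClasses.exists_sifted_eq_empty [Fintype ι] (he : AvoidsClasses h e) {T : Finset ℤ}
    {L : Finset ℕ} {W X : ℕ} (hL : ∀ p ∈ L, p.Prime ∧ W ≤ p) (hXW : X < W ^ 2)
    (hT : ∀ g ∈ T, ∀ i, h i ≠ g ∧ (h i - g).natAbs ≤ X) (hcard : #T + Fintype.card ι ≤ #L) :
    ∃ a : ℕ → ℤ, AvoidsClasses h a ∧ (∀ p ∉ L, a p = e p) ∧ sifted T L a = ∅ := by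
  obtain ⟨f, hinj, hf⟩ := exists_injOn_forall_mem_not (fun g hg =>
    card_filter_exists_modEq_le hL hXW (fun i => (hT g hg i).1) fun i => (hT g hg i).2) hcard
  have leftInv {g : ℤ} (hg : g ∈ T) : Function.invFunOn f T (f g) = g :=
    hinj.leftInvOn_invFunOn hg
  refine ⟨(T.image f).piecewise (Function.invFunOn f T) e, he.piecewise _ ?_, fun p hp => ?_, ?_⟩
  · intro p hp _ i hi
    obtain ⟨g, hg, rfl⟩ := mem_image.mp hp
    rw [leftInv hg] at hi
    exact (hf g hg).2 ⟨i, hi.symm⟩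
  · refine piecewise_eq_of_notMem _ _ _ fun hpT => hp ?_
    obtain ⟨g, hg, rfl⟩ := mem_image.mp hpT
    exact (hf g hg).1
  · refine eq_empty_of_forall_notMem fun g hg => ?_
    obtain ⟨hgT, hg⟩ := mem_sifted.mp hg
    refine hg (f g) (hf g hgT).1 ?_
    rw [piecewise_eq_of_mem _ _ _ (mem_image_of_mem f hgT), leftInv hgT]

end Sieve

/-! ### Sieving by the class of a single integer -/

open Classical in
/-- The primes in the half-open interval `[a, b)` that do not belong to the exceptional set `Z`. -/
noncomputable def primesOutside (Z : Set ℕ) (a b : ℕ) : Finset ℕ :=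
  {p ∈ Ico a b | p.Prime ∧ p ∉ Z}

theorem mem_primesOutside {Z : Set ℕ} {a b p : ℕ} :
    p ∈ primesOutside Z a b ↔ (a ≤ p ∧ p < b) ∧ p.Prime ∧ p ∉ Z := by
  simp [primesOutside]

theorem primesOutside_union_primesOutside (Z : Set ℕ) {a b c : ℕ} (hab : a ≤ b) (hbc : b ≤ c) :
    primesOutside Z a b ∪ primesOutside Z b c = primesOutside Z a c := by
  rw [primesOutside, primesOutside, primesOutside, ← filter_union, Ico_union_Ico_eq_Ico hab hbc]

open Classical in
/-- An upper bound for the number of `n ∈ [1, X]` without prime factors in `[V, W) \ Z`. The three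
terms count the `n` with a divisor in `Z`, those with a prime factor at least `W`, and those that
are `V`-smooth. -/
noncomputable def unsievedBound (Z : Set ℕ) (V W X : ℕ) : ℝ :=
  X * ∑ p ∈ Icc 1 X with p ∈ Z, (1 : ℝ) / p + X / W * X.primeCounting +
    #(Nat.smoothNumbersUpTo X V)

theorem card_filter_exists_dvd_le (A : Finset ℕ) (X : ℕ) :
    (#{n ∈ Icc 1 X | ∃ p ∈ A, p ∣ n} : ℝ) ≤ X * ∑ p ∈ A, (1 : ℝ) / p := by
  have hsub : {n ∈ Icc 1 X | ∃ p ∈ A, p ∣ n} ⊆ A.biUnion fun p => {n ∈ Ioc 0 X | p ∣ n} := by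
    intro n hn
    simp only [mem_biUnion, mem_filter, mem_Ioc, mem_Icc] at hn ⊢
    obtain ⟨hnX, p, hpA, hpn⟩ := hn
    exact ⟨p, hpA, hnX, hpn⟩
  calc (#{n ∈ Icc 1 X | ∃ p ∈ A, p ∣ n} : ℝ)
      ≤ ((∑ p ∈ A, #{n ∈ Ioc 0 X | p ∣ n} : ℕ) : ℝ) :=
        mod_cast (card_le_card hsub).trans card_biUnion_le
    _ ≤ ∑ p ∈ A, (X : ℝ) / p := by
        rw [Nat.cast_sum]
        refine sum_le_sum fun p _ => ?_
        rw [Nat.Ioc_filter_dvd_card_eq_div]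
        exact Nat.cast_div_le
    _ = X * ∑ p ∈ A, (1 : ℝ) / p := by simp_rw [mul_sum, mul_one_div]

theorem card_filter_exists_large_prime_dvd_le (X : ℕ) {W : ℕ} (hW : 0 < W) :
    (#{n ∈ Icc 1 X | ∃ p ∈ {p ∈ X.primesLE | W ≤ p}, p ∣ n} : ℝ) ≤
      X / W * X.primeCounting := by
  refine (card_filter_exists_dvd_le _ X).trans ?_
  have hsum : ∑ p ∈ X.primesLE with W ≤ p, (1 : ℝ) / p ≤ X.primeCounting • (1 / W : ℝ) :=
    calc ∑ p ∈ X.primesLE with W ≤ p, (1 : ℝ) / p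
        ≤ #{p ∈ X.primesLE | W ≤ p} • (1 / W : ℝ) :=
          sum_le_card_nsmul _ _ _ fun p hp =>
            one_div_le_one_div_of_le (mod_cast hW) (mod_cast (mem_filter.mp hp).2)
      _ ≤ X.primeCounting • (1 / W : ℝ) := by
          rw [← Nat.primesLE_card_eq_primeCounting]
          exact nsmul_le_nsmul_left (by positivity) (card_filter_le _ _)
  calc X * ∑ p ∈ X.primesLE with W ≤ p, (1 : ℝ) / p
      ≤ X * X.primeCounting • (1 / W : ℝ) := by gcongr
    _ = X / W * X.primeCounting := by
        rw [nsmul_eq_mul]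
        ring

theorem card_filter_forall_not_dvd_le (Z : Set ℕ) (V X : ℕ) {W : ℕ} (hW : 0 < W) :
    (#{n ∈ Icc 1 X | ∀ p ∈ primesOutside Z V W, ¬ p ∣ n} : ℝ) ≤ unsievedBound Z V W X := by
  classical
  have hsub : {n ∈ Icc 1 X | ∀ p ∈ primesOutside Z V W, ¬ p ∣ n} ⊆
      {n ∈ Icc 1 X | ∃ p ∈ {p ∈ Icc 1 X | p ∈ Z}, p ∣ n} ∪
        {n ∈ Icc 1 X | ∃ p ∈ {p ∈ X.primesLE | W ≤ p}, p ∣ n} ∪ Nat.smoothNumbersUpTo X V := by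
    intro n hn
    obtain ⟨hnX, hn⟩ := mem_filter.mp hn
    obtain ⟨hn1, hnX'⟩ := mem_Icc.mp hnX
    have le_X {p : ℕ} (hpn : p ∣ n) : p ≤ X := (Nat.le_of_dvd hn1 hpn).trans hnX'
    by_contra hcon
    simp only [mem_union, not_or, mem_filter, hnX, true_and, mem_Icc, Nat.mem_primesLE] at hcon
    obtain ⟨⟨hnZ, hnW⟩, hsmooth⟩ := hcon
    refine hsmooth (Nat.mem_smoothNumbersUpTo.mpr ⟨hnX', Nat.mem_smoothNumbers'.mpr ?_⟩)
    intro p hp hpn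
    by_contra! hVp
    refine hn p (mem_primesOutside.mpr ⟨⟨hVp, ?_⟩, hp, ?_⟩) hpn
    · by_contra! hWp
      exact hnW ⟨p, ⟨⟨le_X hpn, hp⟩, hWp⟩, hpn⟩
    · exact fun hpZ => hnZ ⟨p, ⟨⟨hp.one_le, le_X hpn⟩, hpZ⟩, hpn⟩
  calc (#{n ∈ Icc 1 X | ∀ p ∈ primesOutside Z V W, ¬ p ∣ n} : ℝ)
      ≤ #{n ∈ Icc 1 X | ∃ p ∈ {p ∈ Icc 1 X | p ∈ Z}, p ∣ n} +
          #{n ∈ Icc 1 X | ∃ p ∈ {p ∈ X.primesLE | W ≤ p}, p ∣ n} +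
          #(Nat.smoothNumbersUpTo X V) := by
        exact_mod_cast (card_le_card hsub).trans <| (card_union_le _ _).trans <|
          Nat.add_le_add_right (card_union_le _ _) _
    _ ≤ unsievedBound Z V W X := by
        unfold unsievedBound
        gcongr
        exacts [card_filter_exists_dvd_le _ X, card_filter_exists_large_prime_dvd_le X hW]

theorem card_le_two_mul_card_image_natAbs_sub (S : Finset ℤ) (c : ℤ) :
    #S ≤ 2 * #(S.image fun g => (g - c).natAbs) := by
  refine card_le_mul_card_image S 2 fun n _ => ?_
  refine (card_le_card (t := {c + n, c - n}) fun g hg => ?_).trans card_le_two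
  have := (mem_filter.mp hg).2
  simp only [mem_insert, mem_singleton]
  omega

theorem card_sifted_const_le {S : Finset ℤ} {X : ℕ} (hS : S ⊆ Ioc 0 (X : ℤ)) {c : ℤ}
    (hc0 : 0 ≤ c) (hcX : c ≤ X) (Z : Set ℕ) (V : ℕ) {W : ℕ} (hW : 0 < W) :
    (#(sifted S (primesOutside Z V W) fun _ => c) : ℝ) ≤ 2 * unsievedBound Z V W X + 1 := by
  set T := sifted S (primesOutside Z V W) fun _ => c
  have hsub : ((T.erase c).image fun g => (g - c).natAbs) ⊆
      {n ∈ Icc 1 X | ∀ p ∈ primesOutside Z V W, ¬ p ∣ n} := by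
    intro n hn
    obtain ⟨g, hg, rfl⟩ := mem_image.mp hn
    obtain ⟨hgc, hgT⟩ := mem_erase.mp hg
    obtain ⟨hgS, hgM⟩ := mem_sifted.mp hgT
    have hgX := mem_Ioc.mp (hS hgS)
    refine mem_filter.mpr ⟨mem_Icc.mpr ⟨by omega, by omega⟩, fun p hp hpg => hgM p hp ?_⟩
    exact (Int.modEq_iff_dvd.mpr (Int.natCast_dvd.mpr hpg)).symm
  have hcard : #T ≤ 2 * #{n ∈ Icc 1 X | ∀ p ∈ primesOutside Z V W, ¬ p ∣ n} + 1 := by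
    have h₁ := card_le_two_mul_card_image_natAbs_sub (T.erase c) c
    have h₂ := card_le_card hsub
    have h₃ := pred_card_le_card_erase (s := T) (a := c)
    omega
  calc (#T : ℝ) ≤ 2 * #{n ∈ Icc 1 X | ∀ p ∈ primesOutside Z V W, ¬ p ∣ n} + 1 := mod_cast hcard
    _ ≤ 2 * unsievedBound Z V W X + 1 := by
        gcongr
        exact card_filter_forall_not_dvd_le Z V X hW

/-! ### Covering everything except the tuple -/

section Covering

variable {ι : Type*} [Fintype ι] {h : ι → ℤ} {e : ℕ → ℤ}

theorem natAbs_sub_le_of_mem_Ioc {a b : ℤ} {X : ℕ} (ha : a ∈ Ioc 0 (X : ℤ))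
    (hb : b ∈ Ioc 0 (X : ℤ)) : (a - b).natAbs ≤ X := by
  rw [mem_Ioc] at ha hb
  omega

theorem AvoidsClasses.exists_card_sifted_primesOutside_le (he : AvoidsClasses h e) {Z : Set ℕ}
    {U V W X : ℕ} {c : ℤ} (hιU : Fintype.card ι < U) (hUV : U ≤ V) (hVW : V ≤ W)
    (hh : ∀ i, h i ∈ Ioc 0 (X : ℤ)) (hc0 : 0 ≤ c) (hcX : c ≤ X)
    (hc : ∀ p ∈ primesOutside Z V W, ∀ i, ¬ h i ≡ c [ZMOD p])
    {S : Finset ℤ} (hS : S ⊆ Ioc 0 (X : ℤ)) (hhS : ∀ g ∈ S, ∀ i, h i ≠ g) :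
    ∃ a : ℕ → ℤ, AvoidsClasses h a ∧ (∀ p ∉ primesOutside Z U W, a p = e p) ∧
      (#(sifted S (primesOutside Z U W) a) : ℝ) ≤ (2 * unsievedBound Z V W X + 1) *
        exp (-∑ p ∈ primesOutside Z U V, (1 : ℝ) / p + Fintype.card ι * (log X / log 2 / U)) := by
  set P := primesOutside Z U V
  set M := primesOutside Z V W
  have union_eq : M ∪ P = primesOutside Z U W := by
    rw [union_comm, primesOutside_union_primesOutside Z hUV hVW]
  obtain ⟨a, ha, hae, hcard⟩ := (he.piecewise M fun p hp _ => hc p hp).exists_card_sifted_le hιU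
    (P := P) (fun p hp => ⟨(mem_primesOutside.mp hp).2.1, (mem_primesOutside.mp hp).1.1⟩)
    (S := sifted S M fun _ => c) fun g hg i =>
      have hgS := (mem_sifted.mp hg).1
      ⟨hhS g hgS i, natAbs_sub_le_of_mem_Ioc (hh i) (hS hgS)⟩
  have a_eq_c : ∀ p ∈ M, a p = c := fun p hp => by
    have hpP : p ∉ P := fun hpP =>
      (mem_primesOutside.mp hpP).1.2.not_ge (mem_primesOutside.mp hp).1.1
    rw [hae p hpP, piecewise_eq_of_mem _ _ _ hp]
  refine ⟨a, ha, fun p hp => ?_, ?_⟩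
  · rw [← union_eq, mem_union, not_or] at hp
    rw [hae p hp.2, piecewise_eq_of_notMem _ _ _ hp.1]
  · rw [← union_eq, sifted_union, sifted_congr S a_eq_c]
    refine hcard.trans (mul_le_mul_of_nonneg_right ?_ (exp_pos _).le)
    exact card_sifted_const_le hS hc0 hcX Z V (by omega)

/-- The class of `c` is used modulo the medium primes in `[V, W)`, greedily chosen classes modulo
the small primes in `[U, V)`, and each remaining integer is removed by its own large prime in
`[W, N)`. -/
theorem AvoidsClasses.exists_sifted_primesOutside_eq_empty (he : AvoidsClasses h e) {Z : Set ℕ}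
    {U V W N X : ℕ} {c : ℤ} (hιU : Fintype.card ι < U) (hUV : U ≤ V) (hVW : V ≤ W) (hWN : W ≤ N)
    (hXW : X < W ^ 2) (hh : ∀ i, h i ∈ Ioc 0 (X : ℤ)) (hc0 : 0 ≤ c) (hcX : c ≤ X)
    (hc : ∀ p ∈ primesOutside Z V W, ∀ i, ¬ h i ≡ c [ZMOD p])
    (hcount : (2 * unsievedBound Z V W X + 1) *
        exp (-∑ p ∈ primesOutside Z U V, (1 : ℝ) / p +
          Fintype.card ι * (log X / log 2 / U)) + Fintype.card ι ≤ #(primesOutside Z W N))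
    {S : Finset ℤ} (hS : S ⊆ Ioc 0 (X : ℤ)) (hhS : ∀ g ∈ S, ∀ i, h i ≠ g) :
    ∃ a : ℕ → ℤ, AvoidsClasses h a ∧ (∀ p ∉ primesOutside Z U N, a p = e p) ∧
      sifted S (primesOutside Z U N) a = ∅ := by
  set L := primesOutside Z W N
  have union_eq : primesOutside Z U W ∪ L = primesOutside Z U N :=
    primesOutside_union_primesOutside Z (hUV.trans hVW) hWN
  obtain ⟨b, hb, hbe, hcard⟩ :=
    he.exists_card_sifted_primesOutside_le hιU hUV hVW hh hc0 hcX hc hS hhS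
  set T := sifted S (primesOutside Z U W) b
  have hTL : #T + Fintype.card ι ≤ #L :=
    mod_cast (by linarith : (#T : ℝ) + Fintype.card ι ≤ #L)
  obtain ⟨a, ha, hab, hempty⟩ := hb.exists_sifted_eq_empty (T := T) (L := L)
    (fun p hp => ⟨(mem_primesOutside.mp hp).2.1, (mem_primesOutside.mp hp).1.1⟩) hXW
    (fun g hg i =>
      have hgS := (mem_sifted.mp hg).1
      ⟨hhS g hgS i, natAbs_sub_le_of_mem_Ioc (hh i) (hS hgS)⟩) hTL
  refine ⟨a, ha, fun p hp => ?_, ?_⟩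
  · rw [← union_eq, mem_union, not_or] at hp
    rw [hab p hp.2, hbe p hp.1]
  · rw [← union_eq, sifted_union, sifted_congr S fun p hp => hab p fun hpL =>
      (mem_primesOutside.mp hp).1.2.not_ge (mem_primesOutside.mp hpL).1.1]
    exact hempty

end Covering

/-! ### Sparse exceptional sets -/

/-- The finite form of the tail condition on the exceptional set: the reciprocals of the elements of
`Z` that are at least `B` sum to at most `C / B`. -/
def SparseTails (C : ℝ) (Z : Set ℕ) : Prop :=
  ∀ B : ℝ, 0 < B → ∀ F : Finset ℕ, (∀ p ∈ F, p ∈ Z ∧ B ≤ p) → ∑ p ∈ F, (1 : ℝ) / p ≤ C / B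

section SparseTails

variable {C : ℝ} {Z : Set ℕ}

theorem sparseTails_of_tsum_le (hC : 0 < C)
    (hZ : ∀ p' ∈ Z, Summable (fun p : {p : ℕ // p ∈ Z ∧ p' ≤ p} => (1 : ℝ) / (p.1 : ℝ)) ∧
      (∑' p : {p : ℕ // p ∈ Z ∧ p' ≤ p}, (1 : ℝ) / (p.1 : ℝ)) ≤ C / (p' : ℝ)) :
    SparseTails C Z := by
  classical
  intro B hB F hF
  rcases F.eq_empty_or_nonempty with rfl | hne
  · simpa using (div_pos hC hB).le
  set m := F.min' hne
  have hmF : m ∈ F := F.min'_mem hne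
  obtain ⟨hsummable, htsum⟩ := hZ m (hF m hmF).1
  calc ∑ p ∈ F, (1 : ℝ) / p
      = ∑ p ∈ F.subtype fun p => p ∈ Z ∧ m ≤ p, (1 : ℝ) / (p.1 : ℝ) :=
        (sum_subtype_of_mem (fun p : ℕ => (1 : ℝ) / p)
          fun p hp => ⟨(hF p hp).1, F.min'_le p hp⟩).symm
    _ ≤ ∑' p : {p : ℕ // p ∈ Z ∧ m ≤ p}, (1 : ℝ) / (p.1 : ℝ) :=
        hsummable.sum_le_tsum _ fun _ _ => by positivity
    _ ≤ C / m := htsum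
    _ ≤ C / B := div_le_div_of_nonneg_left hC.le hB (hF m hmF).2

theorem SparseTails.sum_inv_le (hZ : SparseTails C Z) (hC : 0 < C) {t : ℝ} (ht : 0 < t)
    (hmin : ∀ p ∈ Z, t / C ≤ p) (F : Finset ℕ) (hF : ∀ p ∈ F, p ∈ Z) :
    ∑ p ∈ F, (1 : ℝ) / p ≤ C ^ 2 / t := by
  calc ∑ p ∈ F, (1 : ℝ) / p ≤ C / (t / C) :=
        hZ _ (by positivity) F fun p hp => ⟨hF p hp, hmin p (hF p hp)⟩
    _ = C ^ 2 / t := by field_simp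

theorem SparseTails.card_le (hZ : SparseTails C Z) {B M : ℝ} (hB : 0 < B) (hBM : B ≤ M)
    (F : Finset ℕ) (hF : ∀ p ∈ F, p ∈ Z ∧ B ≤ p ∧ p ≤ M) : (#F : ℝ) ≤ C * (M / B) := by
  have hM : 0 < M := hB.trans_le hBM
  have hsum : #F • (1 / M) ≤ ∑ p ∈ F, (1 : ℝ) / p :=
    card_nsmul_le_sum _ _ _ fun p hp =>
      one_div_le_one_div_of_le (hB.trans_le (hF p hp).2.1) (hF p hp).2.2
  have hbound := hsum.trans (hZ B hB F fun p hp => ⟨(hF p hp).1, (hF p hp).2.1⟩)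
  rw [nsmul_eq_mul, mul_one_div, div_le_iff₀ hM] at hbound
  exact hbound.trans_eq (by ring)

end SparseTails

/-! ### Counting large primes -/

theorem eventually_log_le_mul {ε : ℝ} (hε : 0 < ε) : ∀ᶠ y : ℝ in atTop, log y ≤ ε * y := by
  filter_upwards [isLittleO_log_id_atTop.bound hε, eventually_ge_atTop 0] with y hy hy0
  simpa [abs_of_nonneg hy0] using (le_abs_self _).trans hy

theorem eventually_div_log_le_primeCounting :
    ∀ᶠ y : ℝ in atTop, 1 / 2 * (y / log y) ≤ Nat.primeCounting ⌊y⌋₊ := by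
  filter_upwards [eventually_log_le_mul (by norm_num : (0 : ℝ) < 1 / 20),
    eventually_ge_atTop 1000, tendsto_log_atTop.eventually_ge_atTop 1] with y hlog hy hl
  refine le_trans ?_ (Chebyshev.pi_ge' (by linarith : 1 < y))
  have hlog_add : log (y + 2) ≤ log y + 1 := by
    have := log_le_log (by linarith) (by linarith : y + 2 ≤ y * 2)
    rw [log_mul (by linarith) two_ne_zero] at this
    linarith [log_two_lt_d9]
  rw [← mul_div_assoc]
  gcongr
  nlinarith [log_two_gt_d9]

theorem eventually_primeCounting_le_div_log :
    ∀ᶠ y : ℝ in atTop, Nat.primeCounting ⌊y⌋₊ ≤ 2 * (y / log y) := by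
  have hlog4 : log 4 + 1 / 2 ≤ 2 := by
    rw [show (4 : ℝ) = 2 ^ 2 by norm_num, log_pow]
    push_cast
    linarith [log_two_lt_d9]
  filter_upwards [Chebyshev.eventually_primeCounting_le (by norm_num : (0 : ℝ) < 1 / 2),
    eventually_ge_atTop 1] with y hy hy1
  have hl : 0 ≤ log y := log_nonneg hy1
  calc (Nat.primeCounting ⌊y⌋₊ : ℝ) ≤ (log 4 + 1 / 2) * y / log y := hy
    _ ≤ 2 * y / log y := by gcongr
    _ = 2 * (y / log y) := by ring

theorem log_eight_le : log 8 ≤ 3 := by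
  rw [show (8 : ℝ) = 2 ^ 3 by norm_num, log_pow]
  push_cast
  linarith [log_two_lt_d9]

theorem eventually_primeCounting_div_eight_le :
    ∀ᶠ y : ℝ in atTop, Nat.primeCounting ⌊y / 8⌋₊ ≤ 3 / 8 * (y / log y) := by
  have hcount := (tendsto_id.atTop_div_const (by norm_num : (0 : ℝ) < 8)).eventually
    eventually_primeCounting_le_div_log
  filter_upwards [hcount, tendsto_log_atTop.eventually_ge_atTop 9, eventually_gt_atTop 0]
    with y hy hl hy0
  have hlog : 2 / 3 * log y ≤ log (y / 8) := by
    rw [log_div hy0.ne' (by norm_num)]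
    linarith [log_eight_le]
  calc (Nat.primeCounting ⌊y / 8⌋₊ : ℝ) ≤ 2 * (y / 8 / log (y / 8)) := hy
    _ ≤ 2 * (y / 8 / (2 / 3 * log y)) := by gcongr
    _ = 3 / 8 * (y / log y) := by field_simp

open Classical in
theorem primeCounting_le_add_card_primesOutside (Z : Set ℕ) (M N : ℕ) :
    Nat.primeCounting N ≤
      Nat.primeCounting M + #{p ∈ Ioc M N | p ∈ Z} + #(primesOutside Z (M + 1) (N + 1)) := by
  have hsub : N.primesLE ⊆
      M.primesLE ∪ {p ∈ Ioc M N | p ∈ Z} ∪ primesOutside Z (M + 1) (N + 1) := by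
    intro p hp
    simp only [mem_union, mem_filter, mem_Ioc, mem_primesOutside, Nat.mem_primesLE] at hp ⊢
    grind
  simpa only [Nat.primesLE_card_eq_primeCounting] using (card_le_card hsub).trans
    ((card_union_le _ _).trans (Nat.add_le_add_right (card_union_le _ _) _))

theorem eventually_le_card_primesOutside (C : ℝ) :
    ∀ᶠ y : ℝ in atTop, ∀ Z : Set ℕ, SparseTails C Z →
      1 / 8 * (y / log y) - 8 * C ≤ #(primesOutside Z (⌊y / 8⌋₊ + 1) (⌊y⌋₊ + 1)) := by
  classical
  filter_upwards [eventually_div_log_le_primeCounting, eventually_primeCounting_div_eight_le,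
    eventually_gt_atTop 0] with y hlower hupper hy Z hZ
  have hexceptional : (#{p ∈ Ioc ⌊y / 8⌋₊ ⌊y⌋₊ | p ∈ Z} : ℝ) ≤ C * (y / (y / 8)) := by
    refine hZ.card_le (by positivity) (by linarith) _ fun p hp => ?_
    obtain ⟨hmem, hpZ⟩ := mem_filter.mp hp
    obtain ⟨hlt, hle⟩ := mem_Ioc.mp hmem
    exact ⟨hpZ, (Nat.lt_of_floor_lt hlt).le, (Nat.le_floor_iff hy.le).mp hle⟩
  have hsplit : (Nat.primeCounting ⌊y⌋₊ : ℝ) ≤ Nat.primeCounting ⌊y / 8⌋₊ +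
      #{p ∈ Ioc ⌊y / 8⌋₊ ⌊y⌋₊ | p ∈ Z} + #(primesOutside Z (⌊y / 8⌋₊ + 1) (⌊y⌋₊ + 1)) :=
    mod_cast primeCounting_le_add_card_primesOutside Z _ _
  rw [show y / (y / 8) = 8 by field_simp] at hexceptional
  linarith

/-! ### Asymptotics of the sieve -/

/-- The level `exp ((log y) ^ (2 / 5))` up to which primes are small. Its logarithm is a power of
`log y`, so that sieving by the small primes saves a power of `log y`, with exponent below `1 / 2`,
so that Rankin's bound makes the smooth numbers negligible. -/
noncomputable def smoothBound (y : ℝ) : ℕ := ⌊exp ((log y ^ (1 / 5 : ℝ)) ^ 2)⌋₊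

section Asymptotics

variable {y : ℝ}

theorem half_le_log_smoothBound (hs : 2 ≤ log y ^ (1 / 5 : ℝ)) :
    (log y ^ (1 / 5 : ℝ)) ^ 2 / 2 ≤ log (smoothBound y) := by
  unfold smoothBound
  set t := (log y ^ (1 / 5 : ℝ)) ^ 2
  have ht : 4 ≤ t := by nlinarith
  have hfloor : exp t / 2 ≤ ⌊exp t⌋₊ := by
    linarith [Nat.lt_floor_add_one (exp t), add_one_le_exp t]
  have hlog := log_le_log (by positivity) hfloor
  rw [log_div (exp_pos t).ne' two_ne_zero, log_exp] at hlog
  linarith [log_two_lt_d9]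

theorem log_smoothBound_le (y : ℝ) : log (smoothBound y) ≤ (log y ^ (1 / 5 : ℝ)) ^ 2 := by
  rcases (smoothBound y).eq_zero_or_pos with h0 | hpos
  · rw [h0, Nat.cast_zero, log_zero]
    positivity
  · exact (log_le_iff_le_exp (by exact_mod_cast hpos)).mpr (Nat.floor_le (exp_pos _).le)

theorem log_rpow_one_div_five_pow (hl : 0 ≤ log y) : (log y ^ (1 / 5 : ℝ)) ^ 5 = log y := by
  rw [← rpow_natCast, ← rpow_mul hl]
  norm_num

theorem tendsto_log_rpow_atTop : Tendsto (fun y : ℝ => log y ^ (1 / 5 : ℝ)) atTop atTop :=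
  (tendsto_rpow_atTop (by norm_num)).comp tendsto_log_atTop

theorem eventually_log_bounds :
    ∀ᶠ y : ℝ in atTop, ∀ z, y ≤ z → z ≤ y * log (log y) →
      log y ≤ log z ∧ log z ≤ 2 * log y := by
  filter_upwards [eventually_ge_atTop 1, tendsto_log_atTop.eventually_ge_atTop 1]
    with y hy hl z hyz hzy
  refine ⟨log_le_log (by linarith) hyz, ?_⟩
  have hll : log (log y) ≤ log y := log_le_self (by linarith)
  have hzl : z ≤ y * log y := hzy.trans (mul_le_mul_of_nonneg_left hll (by linarith))
  have hlog := log_le_log (by linarith) hzl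
  rw [log_mul (by linarith) (by linarith)] at hlog
  linarith

open Classical in
theorem log_log_sub_le_sum_inv_primesOutside {Z : Set ℕ} {U V : ℕ} {E : ℝ} (hV : 2 ≤ V)
    (hZ : ∀ F : Finset ℕ, (∀ p ∈ F, p ∈ Z) → ∑ p ∈ F, (1 : ℝ) / p ≤ E) :
    log (log V) - 1 / 3 * log U - (3 + E) ≤ ∑ p ∈ primesOutside Z U V, (1 : ℝ) / p := by
  have hsub : V.primesBelow ⊆
      primesOutside Z U V ∪ (U.primesBelow ∪ {p ∈ V.primesBelow | p ∈ Z}) := by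
    intro p hp
    simp only [mem_union, mem_filter, mem_primesOutside, Nat.mem_primesBelow] at hp ⊢
    grind
  have hunion (A B : Finset ℕ) :
      ∑ p ∈ A ∪ B, (1 : ℝ) / p ≤ ∑ p ∈ A, (1 : ℝ) / p + ∑ p ∈ B, (1 : ℝ) / p := by
    rw [← sum_union_inter]
    exact le_add_of_nonneg_right (sum_nonneg fun _ _ => by positivity)
  have htotal : ∑ p ∈ V.primesBelow, (1 : ℝ) / p ≤ ∑ p ∈ primesOutside Z U V, (1 : ℝ) / p +
      (∑ p ∈ U.primesBelow, (1 : ℝ) / p + ∑ p ∈ V.primesBelow with p ∈ Z, (1 : ℝ) / p) :=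
    (sum_le_sum_of_subset_of_nonneg hsub fun _ _ _ => by positivity).trans
      ((hunion _ _).trans (add_le_add_right (hunion _ _) _))
  have hexceptional := hZ {p ∈ V.primesBelow | p ∈ Z} fun p hp => (mem_filter.mp hp).2
  linarith [log_log_sub_one_le_sum_inv_primesBelow hV, sum_inv_primesBelow_le U]

theorem eventually_exp_neg_sum_inv_primesOutside_le (k : ℕ) (E : ℝ) :
    ∀ᶠ y : ℝ in atTop, ∀ Z : Set ℕ,
      (∀ F : Finset ℕ, (∀ p ∈ F, p ∈ Z) → ∑ p ∈ F, (1 : ℝ) / p ≤ E) →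
      ∀ t ≤ 2 * log y,
      exp (-∑ p ∈ primesOutside Z ⌈log y⌉₊ (smoothBound y), (1 : ℝ) / p +
          k * (t / log 2 / ⌈log y⌉₊)) ≤
        exp (5 + E + 4 * k) * exp (-(log (log y) / 15)) := by
  filter_upwards [tendsto_log_atTop.eventually_ge_atTop 1,
    tendsto_log_rpow_atTop.eventually_ge_atTop 2] with y hl hs Z hZ t ht
  have hhalf := half_le_log_smoothBound hs
  have hV : 2 ≤ smoothBound y := by
    by_contra! hlt
    have hzero : log (smoothBound y) = 0 := by interval_cases smoothBound y <;> simp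
    nlinarith
  have hlog_log : 2 / 5 * log (log y) - 1 ≤ log (log (smoothBound y)) := by
    have hmono := log_le_log (by positivity) hhalf
    rw [log_div (by positivity) two_ne_zero, log_pow, log_rpow (by linarith)] at hmono
    push_cast at hmono
    linarith [log_two_lt_d9]
  have hceil : log (⌈log y⌉₊ : ℝ) ≤ log (log y) + 1 := by
    have hmono := log_le_log (by positivity)
      (by linarith [Nat.ceil_lt_add_one (by linarith : 0 ≤ log y)] : (⌈log y⌉₊ : ℝ) ≤ 2 * log y)
    rw [log_mul two_ne_zero (by linarith)] at hmono
    linarith [log_two_lt_d9]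
  have hcorrection : t / log 2 / ⌈log y⌉₊ ≤ 4 := by
    have hl0 : (0 : ℝ) < ⌈log y⌉₊ := by linarith [Nat.le_ceil (log y)]
    rw [div_le_iff₀ hl0, div_le_iff₀ (log_pos one_lt_two)]
    nlinarith [Nat.le_ceil (log y), log_two_gt_d9]
  have hmul := mul_le_mul_of_nonneg_left hcorrection (Nat.cast_nonneg (α := ℝ) k)
  rw [← exp_add, exp_le_exp]
  linarith [log_log_sub_le_sum_inv_primesOutside (U := ⌈log y⌉₊) hV hZ]

theorem eventually_card_smoothNumbersUpTo_le :
    ∀ᶠ y : ℝ in atTop, ∀ z, y ≤ z → #(Nat.smoothNumbersUpTo ⌊z⌋₊ (smoothBound y)) ≤ z / log y := by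
  filter_upwards [eventually_ge_atTop 2, tendsto_log_atTop.eventually_ge_atTop 2,
    tendsto_log_rpow_atTop.eventually_ge_atTop 30] with y hy hl hs z hyz
  have hlogV : 2 ≤ log (smoothBound y) := by
    nlinarith [half_le_log_smoothBound (y := y) (by linarith)]
  have hs_pow : (log y ^ (1 / 5 : ℝ)) ^ 5 = log y := log_rpow_one_div_five_pow (by linarith)
  have hV := log_smoothBound_le y
  set s := log y ^ (1 / 5 : ℝ)
  have hfloor : y / 2 ≤ ⌊z⌋₊ := by linarith [Nat.lt_floor_add_one z]
  have hlogX : log y / 2 ≤ log ⌊z⌋₊ := by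
    have hmono := log_le_log (by linarith) hfloor
    rw [log_div (by linarith) two_ne_zero] at hmono
    linarith [log_two_lt_d9]
  have hratio : s ^ 3 / 2 ≤ log ⌊z⌋₊ / log (smoothBound y) := by
    rw [le_div_iff₀ (by linarith)]
    calc s ^ 3 / 2 * log (smoothBound y) ≤ s ^ 3 / 2 * s ^ 2 := by gcongr
      _ = log y / 2 := by rw [← hs_pow]; ring
      _ ≤ log ⌊z⌋₊ := hlogX
  have hlog_log : log (log y) ≤ 5 * s := by
    rw [← hs_pow, log_pow]
    push_cast
    linarith [log_le_self (by linarith : 0 ≤ s)]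
  have hexponent :
      12 * (1 + log (smoothBound y)) - log ⌊z⌋₊ / log (smoothBound y) ≤ -log (log y) := by
    have hpoly : 12 * (1 + s ^ 2) + 5 * s ≤ s ^ 3 / 2 := by nlinarith [sq_nonneg s]
    linarith
  calc (#(Nat.smoothNumbersUpTo ⌊z⌋₊ (smoothBound y)) : ℝ)
      ≤ ⌊z⌋₊ * exp (12 * (1 + log (smoothBound y)) - log ⌊z⌋₊ / log (smoothBound y)) :=
        card_smoothNumbersUpTo_le hlogV (Nat.floor_pos.mpr (by linarith))
    _ ≤ z * exp (-log (log y)) := by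
        have hz : 0 ≤ z := by linarith
        gcongr
        exact Nat.floor_le hz
    _ = z / log y := by rw [exp_neg, exp_log (by linarith), div_eq_mul_inv]

open Classical in
theorem eventually_unsievedBound_le (C : ℝ) :
    ∀ᶠ y : ℝ in atTop, ∀ z, y ≤ z → z ≤ y * log (log y) → ∀ Z : Set ℕ,
      (∀ F : Finset ℕ, (∀ p ∈ F, p ∈ Z) → ∑ p ∈ F, (1 : ℝ) / p ≤ C ^ 2 / log y) →
      unsievedBound Z (smoothBound y) (⌊y / 8⌋₊ + 1) ⌊z⌋₊ ≤
        (C ^ 2 + 17) * (y / log y * log (log y) ^ 2) := by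
  filter_upwards [eventually_gt_atTop 0, eventually_forall_ge_atTop.mpr
      eventually_primeCounting_le_div_log, eventually_card_smoothNumbersUpTo_le,
    tendsto_log_atTop.eventually_ge_atTop 1,
    (tendsto_log_atTop.comp tendsto_log_atTop).eventually_ge_atTop 1]
    with y hy hcount hsmooth hl hll z hyz hzy Z hZ
  simp only [Function.comp_apply] at hll
  have hz : 0 < z := hy.trans_le hyz
  have hX : (⌊z⌋₊ : ℝ) ≤ z := Nat.floor_le hz.le
  have hzl : z / log y ≤ y / log y * log (log y) := by
    calc z / log y ≤ y * log (log y) / log y := by gcongr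
      _ = y / log y * log (log y) := by ring
  have hzl_sq : z / log y ≤ y / log y * log (log y) ^ 2 :=
    hzl.trans (mul_le_mul_of_nonneg_left (by nlinarith) (by positivity))
  have hexceptional : ⌊z⌋₊ * ∑ p ∈ Icc 1 ⌊z⌋₊ with p ∈ Z, (1 : ℝ) / p ≤
      C ^ 2 * (y / log y * log (log y) ^ 2) := by
    calc _ ≤ z * (C ^ 2 / log y) :=
          mul_le_mul hX (hZ _ fun p hp => (mem_filter.mp hp).2)
            (sum_nonneg fun _ _ => by positivity) hz.le
      _ = C ^ 2 * (z / log y) := by ring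
      _ ≤ _ := by gcongr
  have hlarge : ⌊z⌋₊ / ((⌊y / 8⌋₊ + 1 : ℕ) : ℝ) * Nat.primeCounting ⌊z⌋₊ ≤
      16 * (y / log y * log (log y) ^ 2) := by
    have hratio : ⌊z⌋₊ / ((⌊y / 8⌋₊ + 1 : ℕ) : ℝ) ≤ 8 * log (log y) := by
      rw [div_le_iff₀ (by positivity)]
      push_cast
      nlinarith [Nat.lt_floor_add_one (y / 8)]
    have hpi : (Nat.primeCounting ⌊z⌋₊ : ℝ) ≤ 2 * (z / log y) :=
      (hcount z hyz).trans (by gcongr)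
    calc _ ≤ 8 * log (log y) * (2 * (y / log y * log (log y))) :=
          mul_le_mul hratio (hpi.trans (by linarith)) (Nat.cast_nonneg _) (by positivity)
      _ = _ := by ring
  rw [unsievedBound]
  linarith [hsmooth z hyz]

theorem eventually_log_log_sq_mul_exp_le {A : ℝ} (hA : 0 < A) :
    ∀ᶠ y : ℝ in atTop, A * (log (log y) ^ 2 * exp (-(log (log y) / 15))) ≤ 1 / 16 := by
  filter_upwards [((tendsto_pow_mul_exp_neg_atTop_nhds_zero 2).comp
    ((tendsto_log_atTop.comp tendsto_log_atTop).atTop_div_const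
      (by norm_num : (0 : ℝ) < 15))).eventually_le_const
        (by positivity : 0 < 1 / (16 * 225 * A))] with y hy
  simp only [Function.comp_apply] at hy
  rw [le_div_iff₀ (by positivity)] at hy
  linarith

theorem eventually_card_survivors_le (k : ℕ) {C : ℝ} (hC : 0 < C) :
    ∀ᶠ y : ℝ in atTop, ∀ z, y ≤ z → z ≤ y * log (log y) → ∀ Z : Set ℕ,
      SparseTails C Z → (∀ p ∈ Z, log z / C ≤ p) →
      (2 * unsievedBound Z (smoothBound y) (⌊y / 8⌋₊ + 1) ⌊z⌋₊ + 1) *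
        exp (-∑ p ∈ primesOutside Z ⌈log y⌉₊ (smoothBound y), (1 : ℝ) / p +
          k * (log ⌊z⌋₊ / log 2 / ⌈log y⌉₊)) + k ≤
      #(primesOutside Z (⌊y / 8⌋₊ + 1) (⌊y⌋₊ + 1)) := by
  set A : ℝ := (2 * C ^ 2 + 35) * exp (5 + C ^ 2 + 4 * k) with hA
  filter_upwards [eventually_le_card_primesOutside C,
    eventually_exp_neg_sum_inv_primesOutside_le k (C ^ 2), eventually_unsievedBound_le C,
    eventually_log_log_sq_mul_exp_le (by positivity : 0 < A), eventually_log_bounds,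
    eventually_log_le_mul (by positivity : 0 < 1 / (16 * (k + 8 * C))), eventually_ge_atTop 1,
    tendsto_log_atTop.eventually_ge_atTop 1,
    (tendsto_log_atTop.comp tendsto_log_atTop).eventually_ge_atTop 1]
    with y hprimes hsaving hunsieved hdecay hlogs hlog_le hy hl hll z hyz hzy Z hZ hmin
  simp only [Function.comp_apply] at hll
  obtain ⟨hlz, hzl⟩ := hlogs z hyz hzy
  have hsumZ := hZ.sum_inv_le hC (by linarith) fun p hp =>
    (div_le_div_of_nonneg_right hlz hC.le).trans (hmin p hp)
  have hlogX : log ⌊z⌋₊ ≤ 2 * log y :=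
    (log_le_log (Nat.cast_pos.mpr (Nat.floor_pos.mpr (by linarith)))
      (Nat.floor_le (by linarith))).trans hzl
  have hone : 1 ≤ y / log y * log (log y) ^ 2 :=
    one_le_mul_of_one_le_of_one_le ((one_le_div (by linarith)).mpr (log_le_self (by linarith)))
      (one_le_pow₀ hll)
  have hconst : (k : ℝ) + 8 * C ≤ 1 / 16 * (y / log y) := by
    rw [one_div_mul_eq_div, le_div_iff₀ (by positivity)] at hlog_le
    rw [one_div_mul_eq_div, div_div, le_div_iff₀ (by positivity)]
    linarith
  have hproduct : (2 * unsievedBound Z (smoothBound y) (⌊y / 8⌋₊ + 1) ⌊z⌋₊ + 1) *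
        exp (-∑ p ∈ primesOutside Z ⌈log y⌉₊ (smoothBound y), (1 : ℝ) / p +
          k * (log ⌊z⌋₊ / log 2 / ⌈log y⌉₊)) ≤ 1 / 16 * (y / log y) := by
    calc _ ≤ (2 * C ^ 2 + 35) * (y / log y * log (log y) ^ 2) *
          (exp (5 + C ^ 2 + 4 * k) * exp (-(log (log y) / 15))) := by
          refine mul_le_mul (by linarith [hunsieved z hyz hzy Z hsumZ])
            (hsaving Z (fun F hF => (hsumZ F hF).trans ?_) _ hlogX) (exp_pos _).le (by positivity)
          exact div_le_self (by positivity) hl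
      _ = A * (log (log y) ^ 2 * exp (-(log (log y) / 15))) * (y / log y) := by rw [hA]; ring
      _ ≤ 1 / 16 * (y / log y) := by gcongr
  linarith [hprimes Z hZ]

end Asymptotics

/-! ### The tuple -/

theorem exists_strictMono_modEq {k q : ℕ} (hq : 0 < q) (B : ℕ) (r : Fin k → ℤ) :
    ∃ d : Fin k → ℤ, StrictMono d ∧ (∀ i, 0 < d i) ∧ (∀ i, d i ≡ r i [ZMOD q]) ∧
      ∀ p : ℕ, p.Prime → p ≤ B → ¬ p ∣ q → ∀ i, (p : ℤ) ∣ d i := by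
  set Q : ℕ := ∏ p ∈ B.primesLE with ¬ p ∣ q, p
  have hprime : ∀ p ∈ {p ∈ B.primesLE | ¬ p ∣ q}, p.Prime := fun p hp =>
    (Nat.mem_primesLE.mp (mem_filter.mp hp).1).2
  have hQ : (0 : ℤ) < Q := mod_cast prod_pos fun p hp => (hprime p hp).pos
  have hcop : Nat.Coprime Q q := Nat.Coprime.prod_left fun p hp =>
    (hprime p hp).coprime_iff_not_dvd.mpr (mem_filter.mp hp).2
  have hpow : (Q : ℤ) ^ q.totient ≡ 1 [ZMOD q] :=
    mod_cast Int.natCast_modEq_iff.mpr (Nat.ModEq.pow_totient hcop)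
  have hq' : (0 : ℤ) < q := mod_cast hq
  have hmod (i : Fin k) : 0 ≤ r i % q ∧ r i % q < q :=
    ⟨Int.emod_nonneg _ hq'.ne', Int.emod_lt_of_pos _ hq'⟩
  refine ⟨fun i => Q ^ q.totient * (r i % q + q * (i + 1 : ℕ)), fun i j hij => ?_, fun i => ?_,
    fun i => ?_, fun p hp hpB hpq i => ?_⟩
  · have hij' : ((i : ℕ) : ℤ) + 1 ≤ (j : ℕ) := mod_cast hij
    refine mul_lt_mul_of_pos_left ?_ (pow_pos hQ _)
    push_cast
    nlinarith [hmod i, hmod j]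
  · have := (hmod i).1
    positivity
  · have hstep := hpow.mul ((Int.mod_modEq (r i) q).add
      (Int.modEq_zero_iff_dvd.mpr (dvd_mul_right (q : ℤ) (i + 1 : ℕ))))
    simpa only [one_mul, add_zero] using hstep
  · have hpQ : p ∣ Q := dvd_prod_of_mem (fun p => p)
      (mem_filter.mpr ⟨Nat.mem_primesLE.mpr ⟨hpB, hp⟩, hpq⟩)
    exact (dvd_pow (Int.natCast_dvd_natCast.mpr hpQ) (Nat.totient_pos.mpr hq).ne').mul_right _

theorem le_of_dvd_sub_of_mem_Ioc {D p : ℕ} {c u v : ℤ} (hu : u ∈ Ioc c (c + D))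
    (hv : v ∈ Ioc c (c + D)) (hne : u ≠ v) (hdvd : (p : ℤ) ∣ u - v) : p ≤ D := by
  have hle : (p : ℤ) ≤ |u - v| :=
    Int.le_of_dvd (abs_pos.mpr (sub_ne_zero.mpr hne)) ((dvd_abs _ _).mpr hdvd)
  rw [mem_Ioc] at hu hv
  grind

section Tuple

variable {ι : Type*} [Fintype ι] {h : ι → ℤ}

theorem exists_avoidsClasses {q : ℕ} {c : ℤ} (hcop : ∀ i, IsCoprime (h i) (q : ℤ))
    (hc : ∀ p : ℕ, p.Prime → p ≤ Fintype.card ι → ¬ p ∣ q → ∀ i, h i ≡ c [ZMOD p]) :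
    ∃ e : ℕ → ℤ, AvoidsClasses h e ∧ ∀ p : ℕ, p.Prime → p ∣ q → e p = 0 := by
  suffices hclass : ∀ p : ℕ, p.Prime → ∃ b : ℤ, (∀ i, ¬ h i ≡ b [ZMOD p]) ∧ (p ∣ q → b = 0) by
    choose! e he hzero using hclass
    exact ⟨e, he, hzero⟩
  intro p hp
  have hp1 : ¬ (p : ℤ) ∣ 1 := (Nat.prime_iff_prime_int.mp hp).not_dvd_one
  by_cases hpq : p ∣ q
  · refine ⟨0, fun i hmod => hp1 ?_, fun _ => rfl⟩
    exact ((hcop i).isUnit_of_dvd' (Int.modEq_zero_iff_dvd.mp hmod)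
      (Int.natCast_dvd_natCast.mpr hpq)).dvd
  by_cases hpk : p ≤ Fintype.card ι
  · refine ⟨c + 1, fun i hmod => hp1 ?_, fun hdvd => absurd hdvd hpq⟩
    simpa using ((hc p hp hpk hpq i).symm.trans hmod).dvd
  · obtain ⟨b, hb⟩ := exists_forall_not_modEq (not_le.mp hpk) h
    exact ⟨b, hb, fun hdvd => absurd hdvd hpq⟩

theorem AvoidsClasses.admissibleSet {a : ℕ → ℤ} (ha : AvoidsClasses h a) :
    AdmissibleSet (image h univ) := by
  intro p hp
  have : Fact p.Prime := ⟨hp⟩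
  have hne : {n : ZMod p | ∏ g ∈ image h univ, (n + (g : ZMod p)) = 0} ≠ Set.univ := by
    refine (Set.ne_univ_iff_exists_notMem _).mpr ⟨((-a p : ℤ) : ZMod p), fun hmem => ?_⟩
    obtain ⟨g, hg, hzero⟩ := prod_eq_zero_iff.mp hmem
    obtain ⟨i, -, rfl⟩ := mem_image.mp hg
    refine ha p hp i ((ZMod.intCast_eq_intCast_iff _ _ p).mp ?_)
    linear_combination (norm := (push_cast; ring)) hzero
  simpa only [Nat.card_zmod] using Set.ncard_lt_card hne

theorem AvoidsClasses.range_eq {a : ℕ → ℤ} (ha : AvoidsClasses h a) {y z : ℝ}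
    (hy : 0 ≤ y) (hz : 0 ≤ z) (hmem : ∀ i, h i ∈ Ioc 0 (⌊z⌋₊ : ℤ)) {Z : Set ℕ} {U : ℕ}
    (hcover : sifted (Ioc 0 (⌊z⌋₊ : ℤ) \ image h univ) (primesOutside Z U (⌊y⌋₊ + 1)) a = ∅) :
    Set.range h = {g : ℤ | 0 < (g : ℝ) ∧ (g : ℝ) ≤ z} \
      ⋃ p ∈ {p : ℕ | Nat.Prime p ∧ (p : ℝ) ≤ y ∧ p ∉ Z}, {g : ℤ | g ≡ a p [ZMOD (p : ℤ)]} := by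
  have hIoc (g : ℤ) : g ∈ Ioc 0 (⌊z⌋₊ : ℤ) ↔ 0 < (g : ℝ) ∧ (g : ℝ) ≤ z := by
    rw [mem_Ioc, Int.natCast_floor_eq_floor hz, Int.le_floor, Int.cast_pos]
  ext g
  simp only [Set.mem_range, Set.mem_sdiff, Set.mem_ofPred_eq, Set.mem_iUnion, not_exists,
    exists_prop, not_and]
  constructor
  · rintro ⟨i, rfl⟩
    exact ⟨(hIoc _).mp (hmem i), fun p hp => ha p hp.1 i⟩
  · rintro ⟨hg, hsurvives⟩
    by_contra! hne
    refine notMem_empty g (hcover ▸ mem_sifted.mpr ⟨mem_sdiff.mpr ⟨(hIoc g).mpr hg, ?_⟩, ?_⟩)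
    · simpa using hne
    · intro p hp
      obtain ⟨⟨-, hpN⟩, hprime, hpZ⟩ := mem_primesOutside.mp hp
      exact hsurvives p ⟨hprime, (Nat.le_floor_iff hy).mp (Nat.lt_succ_iff.mp hpN), hpZ⟩

end Tuple

theorem exists_translated_tuple {k q : ℕ} (hq : 0 < q) {r : Fin k → ℤ}
    (hrcop : ∀ i, IsCoprime (r i) (q : ℤ)) :
    ∃ D : ℕ, q ≤ D ∧ ∀ y : ℝ, ∃ (c : ℤ) (h : Fin k → ℤ) (e : ℕ → ℤ),
      (c : ℝ) ∈ Set.Ioc y (y + D) ∧ StrictMono h ∧ (∀ i, h i ∈ Ioc c (c + D)) ∧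
      (∀ i, h i ≡ r i [ZMOD q]) ∧ AvoidsClasses h e ∧ ∀ p : ℕ, p.Prime → p ∣ q → e p = 0 := by
  obtain ⟨d, hmono, hpos, hmod, hdvd⟩ := exists_strictMono_modEq hq k r
  have hd_le (i : Fin k) : d i ≤ (q + ∑ j, (d j).toNat : ℕ) := by
    have hle : (d i).toNat ≤ ∑ j, (d j).toNat :=
      single_le_sum (f := fun j => (d j).toNat) (fun _ _ => Nat.zero_le _) (mem_univ i)
    lia
  refine ⟨q + ∑ j, (d j).toNat, Nat.le_add_right _ _, fun y => ?_⟩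
  obtain ⟨m, hm, -⟩ := existsUnique_add_zsmul_mem_Ioc (by exact_mod_cast hq : (0 : ℝ) < q) 0 y
  have hmodEq (i : Fin k) : m * q + d i ≡ r i [ZMOD q] := by
    simpa using (Int.modEq_zero_iff_dvd.mpr (dvd_mul_left (q : ℤ) m)).add (hmod i)
  obtain ⟨e, he, hzero⟩ := exists_avoidsClasses (h := fun i => m * q + d i) (q := q) (c := m * q)
    (fun i => by
      obtain ⟨t, ht⟩ := Int.modEq_iff_add_fac.mp (hmodEq i).symm
      exact ht ▸ (hrcop i).add_mul_left_left t)
    fun p hp hpk hpq i => by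
      simpa using (Int.modEq_zero_iff_dvd.mpr
        (hdvd p hp (hpk.trans_eq (Fintype.card_fin k)) hpq i)).add_left (m * q)
  refine ⟨m * q, fun i => m * q + d i, e, ?_, fun i j hij => add_lt_add_right (hmono hij) _,
    fun i => mem_Ioc.mpr ⟨lt_add_of_pos_right _ (hpos i), ?_⟩, hmodEq, he, hzero⟩
  · simp only [zero_add, zsmul_eq_mul, Set.mem_Ioc] at hm
    push_cast
    exact ⟨hm.1, hm.2.trans (by linarith [(by positivity : (0 : ℝ) ≤ ∑ j, ((d j).toNat : ℝ))])⟩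
  · exact add_le_add_right (hd_le i) _

/-! ### Choosing the parameters -/

theorem eventually_lt_ceil_log (D : ℕ) : ∀ᶠ y : ℝ in atTop, D < ⌈log y⌉₊ := by
  filter_upwards [tendsto_log_atTop.eventually_gt_atTop (D : ℝ)] with y hy
  exact Nat.lt_ceil.mpr hy

theorem eventually_ceil_log_le_smoothBound :
    ∀ᶠ y : ℝ in atTop, ⌈log y⌉₊ ≤ smoothBound y := by
  filter_upwards [tendsto_log_rpow_atTop.eventually_ge_atTop 12,
    tendsto_log_atTop.eventually_ge_atTop 1] with y hs hl
  refine Nat.le_floor ?_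
  have hs_pow : (log y ^ (1 / 5 : ℝ)) ^ 5 = log y := log_rpow_one_div_five_pow (by linarith)
  set s := log y ^ (1 / 5 : ℝ)
  calc (⌈log y⌉₊ : ℝ) ≤ 2 * s ^ 5 := by linarith [Nat.ceil_lt_add_one (zero_le_one.trans hl)]
    _ ≤ (s ^ 2) ^ 3 / (Nat.factorial 3 : ℕ) := by
        norm_num [Nat.factorial]
        nlinarith [pow_pos (by linarith : 0 < s) 5]
    _ ≤ exp (s ^ 2) := pow_div_factorial_le_exp _ (sq_nonneg s) 3

theorem eventually_smoothBound_le : ∀ᶠ y : ℝ in atTop, smoothBound y ≤ ⌊y / 8⌋₊ + 1 := by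
  filter_upwards [tendsto_log_rpow_atTop.eventually_ge_atTop 3, eventually_gt_atTop 0,
    tendsto_log_atTop.eventually_ge_atTop 0] with y hs hy hl
  refine (Nat.floor_mono ?_).trans (Nat.le_succ _)
  have hs_pow : (log y ^ (1 / 5 : ℝ)) ^ 5 = log y := log_rpow_one_div_five_pow hl
  rw [← le_log_iff_exp_le (by positivity), log_div hy.ne' (by norm_num)]
  set s := log y ^ (1 / 5 : ℝ)
  have hpoly : s ^ 2 + 3 ≤ s ^ 5 := by
    have hcube : (3 : ℝ) ^ 3 ≤ s ^ 3 := by gcongr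
    nlinarith [sq_nonneg s]
  linarith [log_eight_le]

theorem eventually_floor_lt_sq :
    ∀ᶠ y : ℝ in atTop, ∀ z ≤ y * log (log y), ⌊z⌋₊ < (⌊y / 8⌋₊ + 1) ^ 2 := by
  filter_upwards [eventually_log_le_mul (by norm_num : (0 : ℝ) < 1 / 100), eventually_gt_atTop 0,
    tendsto_log_atTop.eventually_ge_atTop 0] with y hlog hy hl z hz
  refine (Nat.floor_lt' (by positivity)).mpr ?_
  calc z ≤ y * (1 / 100 * y) :=
        hz.trans (mul_le_mul_of_nonneg_left ((log_le_self hl).trans hlog) hy.le)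
    _ < (y / 8) ^ 2 := by nlinarith
    _ ≤ (((⌊y / 8⌋₊ + 1) ^ 2 : ℕ) : ℝ) := by
        push_cast
        gcongr
        exact (Nat.lt_floor_add_one _).le

theorem eventually_le_mul_log_log {q : ℕ} (hq : 0 < q) :
    ∀ᶠ y : ℝ in atTop, ∀ z,
      2 * (q : ℝ) / q.totient * z ≤ y * log (log y) / log (log (log y)) →
      z ≤ y * log (log y) := by
  have hll := tendsto_log_atTop.comp tendsto_log_atTop
  filter_upwards [eventually_ge_atTop 0, hll.eventually_ge_atTop 0,
    (tendsto_log_atTop.comp hll).eventually_ge_atTop 1] with y hy hll_nonneg hlll z hzy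
  simp only [Function.comp_apply] at hll_nonneg hlll
  have hone : 1 ≤ 2 * (q : ℝ) / q.totient := by
    have htot_le : (q.totient : ℝ) ≤ q := mod_cast Nat.totient_le q
    rw [one_le_div (mod_cast Nat.totient_pos.mpr hq)]
    linarith
  rcases le_total z 0 with hz | hz
  · exact hz.trans (by positivity)
  calc z ≤ 2 * (q : ℝ) / q.totient * z := le_mul_of_one_le_left hz hone
    _ ≤ y * log (log y) / log (log (log y)) := hzy
    _ ≤ y * log (log y) := div_le_self (by positivity) hlll

theorem eventually_exists_sifted_eq_empty (k D : ℕ) {C : ℝ} (hC : 0 < C) :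
    ∀ᶠ y : ℝ in atTop, ∀ z : ℝ, y ≤ z → z ≤ y * log (log y) → ∀ Z : Set ℕ,
      SparseTails C Z → (∀ p ∈ Z, log z / C ≤ p) →
      ∀ (c : ℤ) (h : Fin k → ℤ) (e : ℕ → ℤ), 0 ≤ c → AvoidsClasses h e →
      (∀ i, h i ∈ Ioc c (c + D)) → (∀ i, h i ∈ Ioc 0 (⌊z⌋₊ : ℤ)) → c ≤ ⌊z⌋₊ →
      ∃ a : ℕ → ℤ, AvoidsClasses h a ∧ (∀ p ≤ D, a p = e p) ∧
        sifted (Ioc 0 (⌊z⌋₊ : ℤ) \ image h univ) (primesOutside Z ⌈log y⌉₊ (⌊y⌋₊ + 1)) a = ∅ := by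
  filter_upwards [eventually_card_survivors_le k hC, eventually_lt_ceil_log k,
    eventually_lt_ceil_log D, eventually_ceil_log_le_smoothBound, eventually_smoothBound_le,
    eventually_floor_lt_sq, eventually_ge_atTop 0]
    with y hcount hkU hDU hUV hVW hXW hy z hyz hzy Z hZ hmin c h e hc he hnear hmem hcX
  have hmedium : ∀ p ∈ primesOutside Z (smoothBound y) (⌊y / 8⌋₊ + 1), ∀ i,
      ¬ h i ≡ c [ZMOD p] := by
    intro p hp i hmod
    have hle := Int.le_of_dvd (by linarith [(mem_Ioc.mp (hnear i)).1]) hmod.symm.dvd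
    have hVp := (mem_primesOutside.mp hp).1.1
    have := (mem_Ioc.mp (hnear i)).2
    lia
  have hWN : ⌊y / 8⌋₊ + 1 ≤ ⌊y⌋₊ + 1 := by
    gcongr
    linarith
  obtain ⟨a, ha, hae, hempty⟩ := he.exists_sifted_primesOutside_eq_empty
    (S := Ioc 0 (⌊z⌋₊ : ℤ) \ image h univ) (by simpa using hkU) hUV hVW hWN
    (hXW z hzy) hmem hc hcX hmedium (by simpa using hcount z hyz hzy Z hZ hmin) sdiff_subset
    fun g hg i hi => (mem_sdiff.mp hg).2 (mem_image.mpr ⟨i, mem_univ i, hi⟩)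
  refine ⟨a, ha, fun p hp => hae p fun hmem => ?_, hempty⟩
  have := (mem_primesOutside.mp hmem).1.1
  lia

theorem stmt12_general (k : ℕ) (q : ℕ) (hq : 0 < q) (r : Fin k → ℤ)
    (hrcop : ∀ i, IsCoprime (r i) (q : ℤ)) (C : ℝ) (hC : 0 < C) (δ : ℝ) (hδ : 0 < δ) :
    ∀ᶠ y : ℝ in atTop, ∀ z, (1 + δ) * y ≤ z → z ≤ y * log (log y) →
      ∀ 𝒵 : Set ℕ,
        (∀ p' ∈ 𝒵,
          Summable (fun p : {p : ℕ // p ∈ 𝒵 ∧ p' ≤ p} => (1 : ℝ) / (p.1 : ℝ)) ∧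
          (∑' p : {p : ℕ // p ∈ 𝒵 ∧ p' ≤ p}, (1 : ℝ) / (p.1 : ℝ)) ≤ C / (p' : ℝ) ∧
          log z / C ≤ (p' : ℝ)) →
      ∃ (a : ℕ → ℤ) (h : Fin k → ℤ),
        Function.Injective h ∧
        AdmissibleSet (image h univ) ∧
        (∀ i, y < (h i : ℝ) ∧ (h i : ℝ) ≤ z) ∧
        (Set.range h =
          {g : ℤ | 0 < (g : ℝ) ∧ (g : ℝ) ≤ z} \
            ⋃ p ∈ {p : ℕ | Nat.Prime p ∧ (p : ℝ) ≤ y ∧ p ∉ 𝒵},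
              {g : ℤ | g ≡ a p [ZMOD (p : ℤ)]}) ∧
        (∀ p : ℕ, Nat.Prime p → p ∣ q → (p : ℤ) ∣ a p) ∧
        (∀ i j, i < j → ∀ p : ℕ, Nat.Prime p → (p : ℤ) ∣ h i - h j → (p : ℝ) ≤ y) ∧
        (∀ i, h i ≡ r i [ZMOD (q : ℤ)]) := by
  obtain ⟨D, hqD, htuple⟩ := exists_translated_tuple hq hrcop
  filter_upwards [eventually_exists_sifted_eq_empty k D hC, eventually_ge_atTop (2 * D / δ),
    eventually_ge_atTop (D : ℝ)] with y hsieve hyδ hyD z hz hzy 𝒵 h𝒵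
  have hD : (0 : ℝ) ≤ D := Nat.cast_nonneg D
  have hy : 0 ≤ y := hD.trans hyD
  rw [div_le_iff₀ hδ] at hyδ
  have hyDz : y + D + D ≤ z := by linarith
  obtain ⟨c, h, e, ⟨hyc, hcy⟩, hmono, hnear, hmod, he, hzero⟩ := htuple y
  have hmem (i : Fin k) : y < h i ∧ h i ≤ z := by
    obtain ⟨hlower, hupper⟩ := mem_Ioc.mp (hnear i)
    rify at hlower hupper
    exact ⟨by linarith, by linarith⟩
  have hyz : y ≤ z := by linarith [hyDz]
  have hz0 : 0 ≤ z := hy.trans hyz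
  have hmem_Ioc (i : Fin k) : h i ∈ Ioc 0 (⌊z⌋₊ : ℤ) := by
    rw [mem_Ioc, Int.natCast_floor_eq_floor hz0, Int.le_floor]
    exact ⟨by exact_mod_cast hy.trans_lt (hmem i).1, (hmem i).2⟩
  obtain ⟨a, ha, hae, hempty⟩ := hsieve z hyz hzy 𝒵
    (sparseTails_of_tsum_le hC fun p hp => ⟨(h𝒵 p hp).1, (h𝒵 p hp).2.1⟩)
    (fun p hp => (h𝒵 p hp).2.2) c h e (by exact_mod_cast (hy.trans_lt hyc).le) he hnear hmem_Ioc
    (by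
      rw [Int.natCast_floor_eq_floor hz0, Int.le_floor]
      linarith)
  refine ⟨a, h, hmono.injective, ha.admissibleSet, hmem, ha.range_eq hy hz0 hmem_Ioc hempty,
    fun p hp hpq => ?_, fun i j hij p _ hdvd => ?_, hmod⟩
  · rw [hae p ((Nat.le_of_dvd hq hpq).trans hqD), hzero p hp hpq]
    exact dvd_zero _
  · exact le_trans (by exact_mod_cast
      le_of_dvd_sub_of_mem_Ioc (hnear i) (hnear j) (hmono hij).ne hdvd) hyD

theorem stmt12 (k : ℕ) (hk : 0 < k) (q : ℕ) (hq : 0 < q) (hsq : Squarefree q)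
    (r : Fin k → ℤ) (hrpos : ∀ i, 0 < r i) (hrmono : Monotone r)
    (hrcop : ∀ i, IsCoprime (r i) (q : ℤ)) (C : ℝ) (hC : 0 < C) (δ : ℝ) (hδ : 0 < δ) :
    ∃ y' : ℝ, ∀ x y z : ℝ, 1 ≤ x → y' ≤ y →
      (1 + δ) * y ≤ z →
      2 * y * (1 + (1 + (r ⟨k - 1, by omega⟩ : ℝ)) * x) ≤ 2 * (q : ℝ) / (q.totient : ℝ) * z →
      2 * (q : ℝ) / (q.totient : ℝ) * z ≤
        y * Real.log (Real.log y) / Real.log (Real.log (Real.log y)) →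
      ∀ 𝒵 : Set ℕ, (∀ p ∈ 𝒵, Nat.Prime p) →
        (∀ p' ∈ 𝒵,
          Summable (fun p : {p : ℕ // p ∈ 𝒵 ∧ p' ≤ p} => (1 : ℝ) / (p.1 : ℝ)) ∧
          (∑' p : {p : ℕ // p ∈ 𝒵 ∧ p' ≤ p}, (1 : ℝ) / (p.1 : ℝ)) ≤ C / (p' : ℝ) ∧
          Real.log z / C ≤ (p' : ℝ)) →
      ∃ (a : ℕ → ℤ) (h : Fin k → ℤ),
        Function.Injective h ∧
        AdmissibleSet (Finset.image h Finset.univ) ∧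
        (∀ i, y < (h i : ℝ) ∧ (h i : ℝ) ≤ z) ∧
        (Set.range h =
          {g : ℤ | 0 < (g : ℝ) ∧ (g : ℝ) ≤ z} \
            ⋃ p ∈ {p : ℕ | Nat.Prime p ∧ (p : ℝ) ≤ y ∧ p ∉ 𝒵},
              {g : ℤ | g ≡ a p [ZMOD (p : ℤ)]}) ∧
        (∀ p : ℕ, Nat.Prime p → p ∣ q → (p : ℤ) ∣ a p) ∧
        (∀ i j, i < j → ∀ p : ℕ, Nat.Prime p → (p : ℤ) ∣ h i - h j → (p : ℝ) ≤ y) ∧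
        (∀ i, h i ≡ r i [ZMOD (q : ℤ)]) := by
  obtain ⟨y', hy'⟩ := eventually_atTop.mp
    ((stmt12_general k q hq r hrcop C hC δ hδ).and (eventually_le_mul_log_log hq))
  exact ⟨y', fun _ y z _ hy hyz _ hzy 𝒵 _ => (hy' y hy).1 z hyz ((hy' y hy).2 z hzy) 𝒵⟩
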